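/- arXiv:1601.03296 — 9 statements merged into one kernel-verified Lean document; each statement's English description precedes it below -/
import Mathlib

section
/- For r ∈ (2,3), define I(r) = 4·∫_{r−1}^{2} λ·arccos((λ² + r² − 1)/(2rλ))·( arccos(λ/2) − (λ/2)·√(1 − λ²/4) ) dλ. Then I(r)/(3 − r)³ tends to π/(3√3) as r tends to 3 from below; that is, I(r) = (π/(3√3))·(3 − r)³ + O((3 − r)⁴) as r → 3⁻. -/
open Real Filter Asymptotics Topology intervalIntegral

/-- The integral `I(r)` whose `ρ²` multiple is the expected number of three-hop paths between
two vertices at Euclidean separation `r ∈ [2,3)` in a planar unit disk graph. -/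
noncomputable def threeHopIntegral (r : ℝ) : ℝ :=
  4 * ∫ l in (r - 1)..2,
    l * Real.arccos ((l ^ 2 + r ^ 2 - 1) / (2 * r * l)) *
      (Real.arccos (l / 2) - (l / 2) * Real.sqrt (1 - l ^ 2 / 4))

lemma arccos_bd (w : ℝ) (h0 : 0 ≤ w) (h2 : w ≤ 2) :
    w ≤ arccos (1 - w ^ 2 / 2) ∧ arccos (1 - w ^ 2 / 2) ≤ w + w ^ 3 / 6 := by
  set φ := arccos (1 - w ^ 2 / 2) with hφ
  have hcos : cos φ = 1 - w ^ 2 / 2 := cos_arccos (by nlinarith) (by nlinarith)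
  have hφ0 : 0 ≤ φ := arccos_nonneg _
  have hφp : φ ≤ π := arccos_le_pi _
  have hsin : sin (φ / 2) = w / 2 := by
    rw [sin_half_eq_sqrt hφ0 (by linarith [pi_pos]), hcos]
    rw [show (1 - (1 - w ^ 2 / 2)) / 2 = (w / 2) ^ 2 by ring]
    exact sqrt_sq (by linarith)
  have h1 := sin_le (x := φ / 2) (by linarith)
  have h3 := sin_ge_sub_cube (x := φ / 2) (by linarith)
  have h4 := mul_le_sin (x := φ / 2) (by linarith) (by linarith)
  rw [hsin] at h1 h3 h4
  refine ⟨by linarith, ?_⟩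
  have hpi : π < 3.16 := by linarith [pi_lt_d2]
  have h5 : φ / 2 ≤ 1.58 * (w / 2) := by
    have : 2 / π * (φ / 2) = φ / π := by field_simp
    rw [this, div_le_iff₀ pi_pos] at h4
    nlinarith
  have h6 : (φ / 2) ^ 3 ≤ (1.58 * (w / 2)) ^ 3 := by gcongr
  have : 0 ≤ w ^ 3 := by positivity
  nlinarith

lemma G_bd (q e : ℝ) (h0 : 0 ≤ q) (hq : q ≤ e) (he : e ≤ 1 / 4) :
    |arccos ((2 - q ^ 2) / 2) - ((2 - q ^ 2) / 2) * sqrt (1 - (2 - q ^ 2) ^ 2 / 4)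
      - 2 / 3 * q ^ 3| ≤ 10 * e ^ 5 := by
  have hq1 : q ≤ 1 / 4 := by linarith
  obtain ⟨ha, hb⟩ := arccos_bd q h0 (by linarith)
  have e1 : (2 - q ^ 2) / 2 = 1 - q ^ 2 / 2 := by ring
  have e2 : 1 - (2 - q ^ 2) ^ 2 / 4 = 1 - (1 - q ^ 2 / 2) ^ 2 := by ring
  rw [e1, e2, ← sin_arccos]
  have hcos : cos (arccos (1 - q ^ 2 / 2)) = 1 - q ^ 2 / 2 :=
    cos_arccos (by nlinarith) (by nlinarith)
  set θ := arccos (1 - q ^ 2 / 2) with hθ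
  rw [← hcos]
  have h2 : sin (2 * θ) = 2 * sin θ * cos θ := sin_two_mul θ
  have hq3 : q ^ 3 ≤ q := by nlinarith [mul_nonneg h0 h0, mul_nonneg (mul_nonneg h0 h0) h0]
  have hθ2 : θ ≤ 2 * q := by linarith
  have hθ0 : 0 ≤ θ := by linarith
  have h3 := sin_bound (x := 2 * θ) (by rw [abs_of_nonneg (by linarith)]; linarith)
  rw [abs_of_nonneg (show (0:ℝ) ≤ 2 * θ by linarith), h2, abs_le] at h3
  have h5 : θ ^ 5 ≤ (2 * q) ^ 5 := by gcongr
  have hqe : q ^ 5 ≤ e ^ 5 := by gcongr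
  have h6 : θ ^ 3 - q ^ 3 ≤ 2 * q ^ 5 := by
    have : θ ^ 3 - q ^ 3 = (θ - q) * (θ ^ 2 + θ * q + q ^ 2) := by ring
    rw [this]
    calc _ ≤ (q ^ 3 / 6) * ((2 * q) ^ 2 + (2 * q) * q + q ^ 2) := by
          gcongr
          linarith
      _ = 7 / 6 * q ^ 5 := by ring
      _ ≤ _ := by nlinarith [pow_nonneg h0 5]
  have h7 : q ^ 3 ≤ θ ^ 3 := by gcongr
  have := pow_nonneg h0 5
  rw [abs_le]
  constructor <;> nlinarith [h3.1, h3.2]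

lemma A_bd (p q e : ℝ) (hp0 : 0 ≤ p) (hq0 : 0 ≤ q) (he0 : 0 ≤ e) (hpq : p ^ 2 + q ^ 2 = e ^ 2)
    (he : e ≤ 1 / 4) :
    |arccos (((2 - q ^ 2) ^ 2 + (3 - e ^ 2) ^ 2 - 1) / (2 * (3 - e ^ 2) * (2 - q ^ 2)))
      - p / sqrt 3| ≤ 4 * e ^ 3 := by
  have hpe : p ≤ e := by nlinarith [sq_nonneg q]
  have hqe : q ≤ e := by nlinarith [sq_nonneg p]
  have he2 : e ^ 2 ≤ 1 / 16 := by nlinarith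
  have hq2 : q ^ 2 ≤ e ^ 2 := by gcongr
  have hp2 : p ^ 2 ≤ e ^ 2 := by gcongr
  have hl : 0 < 2 - q ^ 2 := by linarith
  have hr : 0 < 3 - e ^ 2 := by linarith
  have hrl : 2 ≤ (3 - e ^ 2) * (2 - q ^ 2) := by nlinarith
  set w := sqrt (p ^ 2 * (2 - p ^ 2) / ((3 - e ^ 2) * (2 - q ^ 2))) with hw
  have hw0 : 0 ≤ w := sqrt_nonneg _
  have hw2 : w ^ 2 = p ^ 2 * (2 - p ^ 2) / ((3 - e ^ 2) * (2 - q ^ 2)) :=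
    sq_sqrt (by apply div_nonneg <;> [apply mul_nonneg; skip] <;> nlinarith)
  have harg : ((2 - q ^ 2) ^ 2 + (3 - e ^ 2) ^ 2 - 1) / (2 * (3 - e ^ 2) * (2 - q ^ 2))
      = 1 - w ^ 2 / 2 := by
    rw [hw2, ← hpq]
    rw [← hpq] at hr
    field_simp
    ring
  have hdiff : |w ^ 2 - p ^ 2 / 3| ≤ p ^ 2 * e ^ 2 := by
    have : w ^ 2 - p ^ 2 / 3 = p ^ 2 * ((6 * q ^ 2 - e ^ 2 - e ^ 2 * q ^ 2) /
        (3 * ((3 - e ^ 2) * (2 - q ^ 2)))) := by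
      rw [hw2]
      have hpq' : p ^ 2 = e ^ 2 - q ^ 2 := by linarith
      rw [hpq']
      field_simp
      ring
    rw [this, abs_mul, abs_of_nonneg (sq_nonneg p)]
    gcongr
    rw [abs_div, abs_of_pos (show 0 < 3 * ((3 - e ^ 2) * (2 - q ^ 2)) by positivity),
      div_le_iff₀ (by positivity), abs_le]
    constructor <;> nlinarith [sq_nonneg q, sq_nonneg e, mul_nonneg (sq_nonneg q) (sq_nonneg e)]
  have h3 : sqrt 3 ^ 2 = 3 := sq_sqrt (by norm_num)
  have h30 : 0 < sqrt 3 := by positivity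
  have h32 : sqrt 3 ≤ 2 := by nlinarith
  have hpp : p ^ 2 / 3 = (p / sqrt 3) ^ 2 := by rw [div_pow, h3]
  have hw2p : w ≤ 2 * p := by
    have := (abs_le.1 hdiff).2
    apply (sq_le_sq₀ hw0 (by linarith)).1
    nlinarith [sq_nonneg p]
  have hwp : |w - p / sqrt 3| ≤ 2 * e ^ 3 := by
    rcases hp0.eq_or_lt with h | h
    · have : w = 0 := by linarith [h ▸ hw2p]
      rw [this, ← h]; simp; positivity
    · rw [hpp, sq_sub_sq, abs_mul, abs_of_nonneg (by positivity)] at hdiff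
      have h8 : p / 2 ≤ p / sqrt 3 := by gcongr
      have h9 : p / 2 * |w - p / sqrt 3| ≤ p ^ 2 * e ^ 2 := by
        refine le_trans ?_ hdiff
        gcongr
        linarith
      have h10 : |w - p / sqrt 3| ≤ 2 * (p * e ^ 2) := by
        by_contra! hc
        have := mul_lt_mul_of_pos_left hc (show 0 < p / 2 by linarith)
        nlinarith
      have : p * e ^ 2 ≤ e * e ^ 2 := by gcongr
      linarith [show e * e ^ 2 = e ^ 3 by ring]
  obtain ⟨ha, hb⟩ := arccos_bd w hw0 (by linarith)
  rw [harg]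
  have hw3 : w ^ 3 ≤ (2 * e) ^ 3 := by gcongr; linarith
  have : 0 ≤ e ^ 3 := by positivity
  rw [abs_le] at hwp ⊢
  constructor <;> nlinarith [hwp.1, hwp.2]

lemma prod_bd (l A G a g e : ℝ) (he0 : 0 ≤ e) (he : e ≤ 1 / 4) (hl : |l - 2| ≤ e ^ 2)
    (hA : |A - a| ≤ 4 * e ^ 3) (hG : |G - g| ≤ 10 * e ^ 5) (ha : |a| ≤ e) (hg : |g| ≤ e ^ 3) :
    |l * A * G - 2 * a * g| ≤ 100 * e ^ 6 := by
  have key : l * A * G - 2 * a * g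
      = (l - 2) * A * G + 2 * (A - a) * G + 2 * a * (G - g) := by ring
  have he2 : e ^ 2 ≤ 1 / 16 := by nlinarith
  have hA' : |A| ≤ 2 * e := by
    have : |A| ≤ |A - a| + |a| := by simpa using abs_add_le (A - a) a
    nlinarith
  have hG' : |G| ≤ 2 * e ^ 3 := by
    have : |G| ≤ |G - g| + |g| := by simpa using abs_add_le (G - g) g
    have h3 : 0 ≤ e ^ 3 := by positivity
    nlinarith
  rw [key]
  calc _ ≤ |(l - 2) * A * G| + |2 * (A - a) * G| + |2 * a * (G - g)| := abs_add_three _ _ _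
    _ = |l - 2| * |A| * |G| + 2 * |A - a| * |G| + 2 * |a| * |G - g| := by
        simp [abs_mul]
    _ ≤ e ^ 2 * (2 * e) * (2 * e ^ 3) + 2 * (4 * e ^ 3) * (2 * e ^ 3) + 2 * e * (10 * e ^ 5) := by
        gcongr
    _ = 40 * e ^ 6 := by ring
    _ ≤ _ := by nlinarith [pow_nonneg he0 6]

lemma pointwise (r l : ℝ) (hr : r < 3) (hr' : 3 - 1 / 16 ≤ r) (h1 : r - 1 ≤ l) (h2 : l ≤ 2) :
    |l * arccos ((l ^ 2 + r ^ 2 - 1) / (2 * r * l)) *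
      (arccos (l / 2) - (l / 2) * sqrt (1 - l ^ 2 / 4)) -
      4 / (3 * sqrt 3) * (sqrt (l - (r - 1)) * sqrt (2 - l) ^ 3)| ≤ 100 * (3 - r) ^ 3 := by
  set p := sqrt (l - (r - 1)) with hp
  set q := sqrt (2 - l) with hq
  have hp2 : p ^ 2 = l - (r - 1) := sq_sqrt (by linarith)
  have hq2 : q ^ 2 = 2 - l := sq_sqrt (by linarith)
  have hp0 : 0 ≤ p := sqrt_nonneg _
  have hq0 : 0 ≤ q := sqrt_nonneg _
  obtain ⟨e, he, he2⟩ : ∃ e : ℝ, 0 ≤ e ∧ e ^ 2 = 3 - r :=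
    ⟨sqrt (3 - r), sqrt_nonneg _, sq_sqrt (by linarith)⟩
  have hle : l = 2 - q ^ 2 := by linarith
  have hre : r = 3 - e ^ 2 := by linarith
  have he4 : e ≤ 1 / 4 := by nlinarith
  have hpe : p ≤ e := by nlinarith
  have hqe : q ≤ e := by nlinarith
  have hA := A_bd p q e hp0 hq0 he (by linarith) he4
  have hG := G_bd q e hq0 hqe he4
  rw [← hle] at hA hG
  rw [← hre] at hA
  have h3 : sqrt 3 ^ 2 = 3 := sq_sqrt (by norm_num)
  have h31 : 1 ≤ sqrt 3 := by nlinarith [sqrt_nonneg 3]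
  have ha : |p / sqrt 3| ≤ e := by
    rw [abs_of_nonneg (by positivity)]
    exact (div_le_self hp0 h31).trans hpe
  have hg : |2 / 3 * q ^ 3| ≤ e ^ 3 := by
    rw [abs_of_nonneg (by positivity)]
    have : q ^ 3 ≤ e ^ 3 := by gcongr
    have : 0 ≤ q ^ 3 := by positivity
    linarith
  have := prod_bd l _ _ _ _ e he he4 (by rw [abs_le]; constructor <;> nlinarith) hA hG ha hg
  rw [← he2]
  convert this using 1
  · congr 1
    field_simp
    ring
  · ring

lemma odd_int : ∫ x in (-1 : ℝ)..1, x * sqrt (1 - x ^ 2) = 0 := by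
  have := intervalIntegral.integral_comp_neg (a := (-1 : ℝ)) (b := 1)
    (fun x : ℝ => x * sqrt (1 - x ^ 2))
  simp only [neg_neg, neg_sq, neg_mul, intervalIntegral.integral_neg] at this
  linarith

lemma main_int (r : ℝ) (hr : r < 3) :
    ∫ l in (r - 1)..2, sqrt (l - (r - 1)) * sqrt (2 - l) ^ 3 = π / 16 * (3 - r) ^ 3 := by
  have hk : 0 < (3 - r) / 2 := by linarith
  have h := intervalIntegral.mul_integral_comp_mul_add (a := -1) (b := 1)
    (f := fun l => sqrt (l - (r - 1)) * sqrt (2 - l) ^ 3) ((3 - r) / 2) ((r + 1) / 2)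
  rw [show (3 - r) / 2 * -1 + (r + 1) / 2 = r - 1 by ring,
    show (3 - r) / 2 * 1 + (r + 1) / 2 = 2 by ring] at h
  rw [← h]
  have h2 : ∫ x in (-1 : ℝ)..1, sqrt ((3 - r) / 2 * x + (r + 1) / 2 - (r - 1)) *
      sqrt (2 - ((3 - r) / 2 * x + (r + 1) / 2)) ^ 3
      = ∫ x in (-1 : ℝ)..1, ((3 - r) / 2) ^ 2 * (sqrt (1 - x ^ 2) - x * sqrt (1 - x ^ 2)) := by
    apply intervalIntegral.integral_congr
    intro x hx
    rw [Set.uIcc_of_le (by norm_num)] at hx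
    obtain ⟨hx1, hx2⟩ := hx
    have e1 : (3 - r) / 2 * x + (r + 1) / 2 - (r - 1) = (3 - r) / 2 * (1 + x) := by ring
    have e2 : 2 - ((3 - r) / 2 * x + (r + 1) / 2) = (3 - r) / 2 * (1 - x) := by ring
    have e3 : 1 - x ^ 2 = (1 + x) * (1 - x) := by ring
    simp only [e1, e2, e3]
    rw [sqrt_mul hk.le, sqrt_mul hk.le, sqrt_mul (by linarith : 0 ≤ 1 + x)]
    have s1 := sq_sqrt hk.le
    have s2 := sq_sqrt (show 0 ≤ 1 - x by linarith)
    calc _ = (sqrt ((3 - r) / 2) ^ 2) ^ 2 * (sqrt (1 + x) * sqrt (1 - x) * sqrt (1 - x) ^ 2) := by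
          ring
      _ = _ := by rw [s1, s2]; ring
  rw [h2, intervalIntegral.integral_const_mul, intervalIntegral.integral_sub, odd_int,
    integral_sqrt_one_sub_sq]
  · ring
  · exact (by fun_prop : Continuous fun x : ℝ => sqrt (1 - x ^ 2)).intervalIntegrable _ _
  · exact (by fun_prop : Continuous fun x : ℝ => x * sqrt (1 - x ^ 2)).intervalIntegrable _ _

lemma int_bd (r : ℝ) (hr : r < 3) (hr' : 3 - 1 / 16 ≤ r) :
    |threeHopIntegral r - π / (3 * sqrt 3) * (3 - r) ^ 3| ≤ 400 * (3 - r) ^ 4 := by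
  have hle : r - 1 ≤ 2 := by linarith
  have hM : π / (3 * sqrt 3) * (3 - r) ^ 3 =
      4 * ∫ l in (r - 1)..2, 4 / (3 * sqrt 3) * (sqrt (l - (r - 1)) * sqrt (2 - l) ^ 3) := by
    rw [intervalIntegral.integral_const_mul, main_int r hr]
    field_simp
    ring
  rw [hM, threeHopIntegral, ← mul_sub, ← intervalIntegral.integral_sub]
  · rw [abs_mul]
    have := intervalIntegral.norm_integral_le_of_norm_le_const (a := r - 1) (b := 2)
      (C := 100 * (3 - r) ^ 3) (f := fun l => l * arccos ((l ^ 2 + r ^ 2 - 1) / (2 * r * l)) *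
      (arccos (l / 2) - (l / 2) * sqrt (1 - l ^ 2 / 4)) -
      4 / (3 * sqrt 3) * (sqrt (l - (r - 1)) * sqrt (2 - l) ^ 3)) (by
        intro l hl
        rw [Set.uIoc_of_le hle] at hl
        exact pointwise r l hr hr' hl.1.le hl.2)
    rw [Real.norm_eq_abs, abs_of_nonneg (show 0 ≤ 2 - (r - 1) by linarith)] at this
    rw [abs_of_pos (by norm_num : (0:ℝ) < 4)]
    calc _ ≤ 4 * (100 * (3 - r) ^ 3 * (2 - (r - 1))) := by gcongr
      _ = _ := by ring
  · apply ContinuousOn.intervalIntegrable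
    rw [Set.uIcc_of_le hle]
    have hne : ∀ l ∈ Set.Icc (r - 1) 2, 2 * r * l ≠ 0 := by
      intro l hl
      have : 0 < l := by linarith [hl.1]
      have : 0 < r := by linarith
      positivity
    have h1 : ContinuousOn (fun l : ℝ => (l ^ 2 + r ^ 2 - 1) / (2 * r * l)) (Set.Icc (r - 1) 2) :=
      ContinuousOn.div (by fun_prop) (by fun_prop) hne
    have h2 : Continuous (fun l : ℝ => arccos (l / 2) - (l / 2) * sqrt (1 - l ^ 2 / 4)) :=
      (continuous_arccos.comp (by fun_prop)).sub (by fun_prop)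
    exact (continuousOn_id.mul (continuous_arccos.comp_continuousOn h1)).mul h2.continuousOn
  · apply Continuous.intervalIntegrable
    fun_prop

/-- `I(r)/(3 − r)³ → π/(3√3)` as `r → 3⁻`; that is,
`I(r) = (π/(3√3))·(3 − r)³ + O((3 − r)⁴)` as `r → 3⁻`. -/
theorem threeHopIntegral_asymptotics :
    Tendsto (fun r : ℝ => threeHopIntegral r / (3 - r) ^ 3) (𝓝[<] 3)
      (𝓝 (π / (3 * Real.sqrt 3))) ∧
    (fun r : ℝ => threeHopIntegral r - π / (3 * Real.sqrt 3) * (3 - r) ^ 3)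
      =O[𝓝[<] 3] (fun r : ℝ => (3 - r) ^ 4) := by
  have hev : ∀ᶠ r : ℝ in 𝓝[<] 3, r < 3 ∧ 3 - 1 / 16 ≤ r := by
    filter_upwards [Ioo_mem_nhdsLT (show (3 - 1 / 16 : ℝ) < 3 by norm_num)] with r hr
    exact ⟨hr.2, hr.1.le⟩
  have hO : (fun r : ℝ => threeHopIntegral r - π / (3 * Real.sqrt 3) * (3 - r) ^ 3)
      =O[𝓝[<] 3] (fun r : ℝ => (3 - r) ^ 4) := by
    apply IsBigO.of_bound 400
    filter_upwards [hev] with r hr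
    rw [Real.norm_eq_abs, Real.norm_eq_abs, abs_of_nonneg (show 0 ≤ (3 - r) ^ 4 by positivity)]
    exact int_bd r hr.1 hr.2
  refine ⟨?_, hO⟩
  have hlim : Tendsto (fun r : ℝ => 400 * (3 - r)) (𝓝[<] 3) (𝓝 0) := by
    have : Tendsto (fun r : ℝ => 400 * (3 - r)) (𝓝 3) (𝓝 (400 * (3 - 3))) :=
      Continuous.tendsto (by fun_prop) 3
    simp only [sub_self, mul_zero] at this
    exact this.mono_left nhdsWithin_le_nhds
  rw [tendsto_iff_norm_sub_tendsto_zero]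
  refine squeeze_zero' (Eventually.of_forall fun r => norm_nonneg _) ?_ hlim
  filter_upwards [hev] with r hr
  have hpos : 0 < 3 - r := by linarith [hr.1]
  have h := int_bd r hr.1 hr.2
  have : threeHopIntegral r / (3 - r) ^ 3 - π / (3 * Real.sqrt 3) =
      (threeHopIntegral r - π / (3 * Real.sqrt 3) * (3 - r) ^ 3) / (3 - r) ^ 3 := by
    field_simp
  rw [this, norm_div, Real.norm_eq_abs, Real.norm_eq_abs, abs_of_pos (pow_pos hpos 3),
    div_le_iff₀ (pow_pos hpos 3)]
  calc _ ≤ _ := h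
    _ = _ := by ring
end

section
/- For r ∈ [2,3], the following exact integral identity holds: ∫_{r−1}^{2} ( (π/12)(4 + λ)(2 − λ)² ) · ( 2πλ²·(1 − (r² + λ² − 1)/(2rλ)) ) dλ = (π²/1260)·( (r + 3)(r + 9) − 6/r )·(3 − r)⁴. -/
open Real intervalIntegral

/-- For `r ∈ [2,3]`, the exact identity
`∫_{r−1}^{2} ((π/12)(4+λ)(2−λ)²)·(2πλ²(1 − (r²+λ²−1)/(2rλ))) dλ
  = (π²/1260)·((r+3)(r+9) − 6/r)·(3−r)⁴` holds. -/
theorem threeHop_integral_3d (r : ℝ) (hr : r ∈ Set.Icc (2 : ℝ) 3) :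
    (∫ l in (r - 1)..2,
        (π / 12 * (4 + l) * (2 - l) ^ 2) *
          (2 * π * l ^ 2 * (1 - (r ^ 2 + l ^ 2 - 1) / (2 * r * l)))) =
      π ^ 2 / 1260 * ((r + 3) * (r + 9) - 6 / r) * (3 - r) ^ 4 := by
  have hr0 : r ≠ 0 := by linarith [hr.1]
  have hF : ∀ l ∈ Set.uIcc (r - 1) 2, HasDerivAt
      (fun l : ℝ => π ^ 2 / (12 * r) * (-(l ^ 7) / 7 + 2 * r * l ^ 6 / 6
        + (12 - (r ^ 2 - 1)) * l ^ 5 / 5 + (-16 - 24 * r) * l ^ 4 / 4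
        + (32 * r + 12 * (r ^ 2 - 1)) * l ^ 3 / 3 + (-16 * (r ^ 2 - 1)) * l ^ 2 / 2))
      (π ^ 2 / (12 * r) * (-(l ^ 6) + 2 * r * l ^ 5
        + (12 - (r ^ 2 - 1)) * l ^ 4 + (-16 - 24 * r) * l ^ 3
        + (32 * r + 12 * (r ^ 2 - 1)) * l ^ 2 + (-16 * (r ^ 2 - 1)) * l)) l := by
    intro l _
    have h := fun n : ℕ => hasDerivAt_pow n l
    have := (((((((h 7).neg.div_const 7).add (((h 6).const_mul (2 * r)).div_const 6)).add
      (((h 5).const_mul (12 - (r ^ 2 - 1))).div_const 5)).add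
      (((h 4).const_mul (-16 - 24 * r)).div_const 4)).add
      (((h 3).const_mul (32 * r + 12 * (r ^ 2 - 1))).div_const 3)).add
      (((h 2).const_mul (-16 * (r ^ 2 - 1))).div_const 2)).const_mul (π ^ 2 / (12 * r))
    refine this.congr_deriv ?_
    push_cast
    ring
  have hI := integral_eq_sub_of_hasDerivAt hF
    (Continuous.intervalIntegrable (by fun_prop) _ _)
  have hc : ∀ l : ℝ, (π / 12 * (4 + l) * (2 - l) ^ 2) *
          (2 * π * l ^ 2 * (1 - (r ^ 2 + l ^ 2 - 1) / (2 * r * l))) =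
      π ^ 2 / (12 * r) * (-(l ^ 6) + 2 * r * l ^ 5
        + (12 - (r ^ 2 - 1)) * l ^ 4 + (-16 - 24 * r) * l ^ 3
        + (32 * r + 12 * (r ^ 2 - 1)) * l ^ 2 + (-16 * (r ^ 2 - 1)) * l) := by
    intro l
    by_cases hl : l = 0
    · simp [hl]
    · field_simp
      ring
  simp_rw [hc]
  rw [hI]
  field_simp
  ring
end

section
/- For r ∈ [3,4], with S(a,λ) = 2πλ²·(1 − (a² + λ² − 1)/(2aλ)) and V(λ) = (π/12)(4 + λ)(2 − λ)², the following exact double-integral identity holds: ∫_{r−1}^{3} S(r,λ₁) · ( ∫_{λ₁−1}^{2} V(λ₂)·S(λ₁,λ₂) dλ₂ ) dλ₁ = (π³/453600)·( (2 + r)(8 + r)(14 + r) − 144/r )·(4 − r)⁶. -/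
open Real intervalIntegral

/-- The surface area `S(a,λ)` of the spherical cap cut from the sphere of radius `λ` about a
point by the unit ball about a second point at distance `a` from the first. -/
noncomputable def capArea (a l : ℝ) : ℝ :=
  2 * π * l ^ 2 * (1 - (a ^ 2 + l ^ 2 - 1) / (2 * a * l))

/-- The volume `V(λ)` of the intersection of two unit balls in `ℝ³` whose centres are at
distance `λ`. -/
noncomputable def lensVol3 (l : ℝ) : ℝ :=
  π / 12 * (4 + l) * (2 - l) ^ 2

theorem capArea_eq (a l : ℝ) (ha : a ≠ 0) : capArea a l = π / a * (l * (1 - (a - l) ^ 2)) := by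
  unfold capArea
  by_cases hl : l = 0
  · simp [hl]
  · field_simp
    ring

theorem inner_int (a u v : ℝ) : ∫ x in u..v, (4 + x) * (2 - x)^2 * (x * (1 - (a - x)^2)) =
    (fun x : ℝ => ((8)*a^0 + (-8)*a^2) * x^2 + ((-4)*a^0 + (32/3)*a^1 + (4)*a^2) * x^3 + ((-4)*a^0 + (-6)*a^1) * x^4 + ((13/5)*a^0 + (-1/5)*a^2) * x^5 + ((1/3)*a^1) * x^6 + ((-1/7)*a^0) * x^7) v - (fun x : ℝ => ((8)*a^0 + (-8)*a^2) * x^2 + ((-4)*a^0 + (32/3)*a^1 + (4)*a^2) * x^3 + ((-4)*a^0 + (-6)*a^1) * x^4 + ((13/5)*a^0 + (-1/5)*a^2) * x^5 + ((1/3)*a^1) * x^6 + ((-1/7)*a^0) * x^7) u := by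
  apply intervalIntegral.integral_eq_sub_of_hasDerivAt
  · intro x _
    have h := (((((((hasDerivAt_pow 2 x).const_mul (((8)*a^0 + (-8)*a^2) : ℝ)).add
      ((hasDerivAt_pow 3 x).const_mul (((-4)*a^0 + (32/3)*a^1 + (4)*a^2) : ℝ))).add
      ((hasDerivAt_pow 4 x).const_mul (((-4)*a^0 + (-6)*a^1) : ℝ))).add
      ((hasDerivAt_pow 5 x).const_mul (((13/5)*a^0 + (-1/5)*a^2) : ℝ))).add
      ((hasDerivAt_pow 6 x).const_mul (((1/3)*a^1) : ℝ))).add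
      ((hasDerivAt_pow 7 x).const_mul (((-1/7)*a^0) : ℝ)))
    refine HasDerivAt.congr_deriv (HasDerivAt.congr_of_eventuallyEq h (Filter.Eventually.of_forall fun y => ?_)) ?_
    · simp only [Pi.add_apply]
    · push_cast
      ring
  · apply Continuous.intervalIntegrable
    fun_prop

theorem outer_int (r u v : ℝ) : ∫ x in u..v, (1 - (r - x)^2) * ((-162/35)*x^0 + (27)*x^1 + (-108/5)*x^2 + (3)*x^3 + (2)*x^4 + (-3/5)*x^5 + (1/105)*x^7) =
    (fun x : ℝ => ((-162/35)*r^0 + (162/35)*r^2) * x^1 + ((27/2)*r^0 + (-162/35)*r^1 + (-27/2)*r^2) * x^2 + ((-198/35)*r^0 + (18)*r^1 + (36/5)*r^2) * x^3 + ((-6)*r^0 + (-54/5)*r^1 + (-3/4)*r^2) * x^4 + ((118/25)*r^0 + (6/5)*r^1 + (-2/5)*r^2) * x^5 + ((-3/5)*r^0 + (2/3)*r^1 + (1/10)*r^2) * x^6 + ((-2/7)*r^0 + (-6/35)*r^1) * x^7 + ((8/105)*r^0 + (-1/840)*r^2) * x^8 + ((2/945)*r^1) * x^9 + ((-1/1050)*r^0)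 * x^10) v - (fun x : ℝ => ((-162/35)*r^0 + (162/35)*r^2) * x^1 + ((27/2)*r^0 + (-162/35)*r^1 + (-27/2)*r^2) * x^2 + ((-198/35)*r^0 + (18)*r^1 + (36/5)*r^2) * x^3 + ((-6)*r^0 + (-54/5)*r^1 + (-3/4)*r^2) * x^4 + ((118/25)*r^0 + (6/5)*r^1 + (-2/5)*r^2) * x^5 + ((-3/5)*r^0 + (2/3)*r^1 + (1/10)*r^2) * x^6 + ((-2/7)*r^0 + (-6/35)*r^1) * x^7 + ((8/105)*r^0 + (-1/840)*r^2) * x^8 + ((2/945)*r^1) * x^9 + ((-1/1050)*r^0) * x^10) u := by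
  apply intervalIntegral.integral_eq_sub_of_hasDerivAt
  · intro x _
    have h := (((((((((((hasDerivAt_pow 1 x).const_mul (((-162/35)*r^0 + (162/35)*r^2) : ℝ)).add
      ((hasDerivAt_pow 2 x).const_mul (((27/2)*r^0 + (-162/35)*r^1 + (-27/2)*r^2) : ℝ))).add
      ((hasDerivAt_pow 3 x).const_mul (((-198/35)*r^0 + (18)*r^1 + (36/5)*r^2) : ℝ))).add
      ((hasDerivAt_pow 4 x).const_mul (((-6)*r^0 + (-54/5)*r^1 + (-3/4)*r^2) : ℝ))).add
      ((hasDerivAt_pow 5 x).const_mul (((118/25)*r^0 + (6/5)*r^1 + (-2/5)*r^2) : ℝ))).add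
      ((hasDerivAt_pow 6 x).const_mul (((-3/5)*r^0 + (2/3)*r^1 + (1/10)*r^2) : ℝ))).add
      ((hasDerivAt_pow 7 x).const_mul (((-2/7)*r^0 + (-6/35)*r^1) : ℝ))).add
      ((hasDerivAt_pow 8 x).const_mul (((8/105)*r^0 + (-1/840)*r^2) : ℝ))).add
      ((hasDerivAt_pow 9 x).const_mul (((2/945)*r^1) : ℝ))).add
      ((hasDerivAt_pow 10 x).const_mul (((-1/1050)*r^0) : ℝ)))
    refine HasDerivAt.congr_deriv (HasDerivAt.congr_of_eventuallyEq h (Filter.Eventually.of_forall fun y => ?_)) ?_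
    · simp only [Pi.add_apply]
    · push_cast
      ring
  · apply Continuous.intervalIntegrable
    fun_prop

theorem inner_eq (a : ℝ) (ha : a ≠ 0) : ∫ x in (a - 1)..2, lensVol3 x * capArea a x =
    π ^ 2 / 12 / a * ((-162/35)*a^0 + (27)*a^1 + (-108/5)*a^2 + (3)*a^3 + (2)*a^4 + (-3/5)*a^5 + (1/105)*a^7) := by
  have h : ∀ x : ℝ, lensVol3 x * capArea a x =
      π ^ 2 / 12 / a * ((4 + x) * (2 - x)^2 * (x * (1 - (a - x)^2))) := by
    intro x
    rw [capArea_eq a x ha, lensVol3]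
    ring
  simp_rw [h]
  rw [intervalIntegral.integral_const_mul, inner_int]
  ring

/-- For `r ∈ [3,4]`, the exact identity
`∫_{r−1}^{3} S(r,λ₁)·(∫_{λ₁−1}^{2} V(λ₂)·S(λ₁,λ₂) dλ₂) dλ₁
  = (π³/453600)·((2+r)(8+r)(14+r) − 144/r)·(4−r)⁶` holds. -/
theorem fourHop_integral_3d (r : ℝ) (hr : r ∈ Set.Icc (3 : ℝ) 4) :
    (∫ l₁ in (r - 1)..3, capArea r l₁ * ∫ l₂ in (l₁ - 1)..2, lensVol3 l₂ * capArea l₁ l₂) =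
      π ^ 3 / 453600 * ((2 + r) * (8 + r) * (14 + r) - 144 / r) * (4 - r) ^ 6 := by
  have hr0 : r ≠ 0 := by
    have := hr.1
    intro h
    linarith
  have h : ∀ x ∈ Set.uIcc (r - 1) 3,
      (capArea r x * ∫ l₂ in (x - 1)..2, lensVol3 l₂ * capArea x l₂) =
      π ^ 3 / 12 / r * ((1 - (r - x)^2) * ((-162/35)*x^0 + (27)*x^1 + (-108/5)*x^2 + (3)*x^3 + (2)*x^4 + (-3/5)*x^5 + (1/105)*x^7)) := by
    intro x hx
    rw [Set.uIcc_of_le (by linarith [hr.2])] at hx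
    have hx0 : x ≠ 0 := by
      have := hx.1
      have := hr.1
      intro h
      linarith
    rw [capArea_eq r x hr0, inner_eq x hx0]
    generalize (-162/35)*x^0 + (27)*x^1 + (-108/5)*x^2 + (3)*x^3 + (2)*x^4 + (-3/5)*x^5 + (1/105)*x^7 = g
    field_simp
  rw [intervalIntegral.integral_congr h, intervalIntegral.integral_const_mul, outer_int]
  field_simp
  ring
end

section
/- Let R > 0 and 0 ≤ ε < R, and define r(θ) = √(R² − ε² sin²θ) − ε·cos θ. Then ∫₀^{2π} r(θ)·r(θ + π)·( r(θ) + r(θ + π) ) dθ = 8R·(R² − ε²)·E(ε/R), where E(k) = ∫₀^{π/2} √(1 − k² sin²θ) dθ is the complete elliptic integral of the second kind. Consequently the continuum betweenness g(ε) = (1/(4V²))·∫₀^{2π} r(θ)r(θ+π)(r(θ)+r(θ+π)) dθ with V = πR² equals (2(R² − ε²)/(π²R³))·E(ε/R). -/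
open Real intervalIntegral

/-- The complete elliptic integral of the second kind,
`E(k) = ∫₀^{π/2} √(1 − k² sin²θ) dθ`. -/
noncomputable def ellipticE (k : ℝ) : ℝ :=
  ∫ θ in (0 : ℝ)..(π / 2), Real.sqrt (1 - k ^ 2 * Real.sin θ ^ 2)

theorem aux_four (f : ℝ → ℝ) (hf : Continuous f) (h1 : ∀ x, f (π - x) = f x)
    (h2 : ∀ x, f (x + π) = f x) :
    ∫ θ in (0 : ℝ)..(2 * π), f θ = 4 * ∫ θ in (0 : ℝ)..(π / 2), f θ := by
  have hi : ∀ a b, IntervalIntegrable f MeasureTheory.volume a b :=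
    fun a b => hf.intervalIntegrable a b
  have e1 : ∫ θ in (π / 2)..π, f θ = ∫ θ in (0 : ℝ)..(π / 2), f θ := by
    have h := intervalIntegral.integral_comp_sub_left (a := 0) (b := π / 2) f π
    simp only [h1] at h
    rw [h]
    congr 1 <;> ring
  have e2 : ∫ θ in π..(2 * π), f θ = ∫ θ in (0 : ℝ)..π, f θ := by
    have h := intervalIntegral.integral_comp_add_right (a := 0) (b := π) f π
    simp only [h2] at h
    rw [h]
    congr 1 <;> ring
  rw [← intervalIntegral.integral_add_adjacent_intervals (hi 0 π) (hi π (2 * π)), e2,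
    ← intervalIntegral.integral_add_adjacent_intervals (hi 0 (π / 2)) (hi (π / 2) π), e1]
  ring

/-- With `r(θ) = √(R² − ε² sin²θ) − ε cos θ` for `0 ≤ ε < R`, we have
`∫₀^{2π} r(θ)r(θ+π)(r(θ)+r(θ+π)) dθ = 8R(R² − ε²)E(ε/R)`; consequently the continuum
betweenness `g(ε) = (1/(4V²))·∫₀^{2π} r(θ)r(θ+π)(r(θ)+r(θ+π)) dθ` with `V = πR²` equals
`(2(R² − ε²)/(π²R³))·E(ε/R)`. -/
theorem continuum_betweenness_disk (R ε : ℝ) (hR : 0 < R) (hε : 0 ≤ ε) (hεR : ε < R) :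
    (∫ θ in (0 : ℝ)..(2 * π),
        (Real.sqrt (R ^ 2 - ε ^ 2 * Real.sin θ ^ 2) - ε * Real.cos θ) *
          (Real.sqrt (R ^ 2 - ε ^ 2 * Real.sin (θ + π) ^ 2) - ε * Real.cos (θ + π)) *
          ((Real.sqrt (R ^ 2 - ε ^ 2 * Real.sin θ ^ 2) - ε * Real.cos θ) +
            (Real.sqrt (R ^ 2 - ε ^ 2 * Real.sin (θ + π) ^ 2) - ε * Real.cos (θ + π)))) =
      8 * R * (R ^ 2 - ε ^ 2) * ellipticE (ε / R) ∧
    (1 / (4 * (π * R ^ 2) ^ 2)) *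
        (∫ θ in (0 : ℝ)..(2 * π),
          (Real.sqrt (R ^ 2 - ε ^ 2 * Real.sin θ ^ 2) - ε * Real.cos θ) *
            (Real.sqrt (R ^ 2 - ε ^ 2 * Real.sin (θ + π) ^ 2) - ε * Real.cos (θ + π)) *
            ((Real.sqrt (R ^ 2 - ε ^ 2 * Real.sin θ ^ 2) - ε * Real.cos θ) +
              (Real.sqrt (R ^ 2 - ε ^ 2 * Real.sin (θ + π) ^ 2) - ε * Real.cos (θ + π)))) =
      2 * (R ^ 2 - ε ^ 2) / (π ^ 2 * R ^ 3) * ellipticE (ε / R) := by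
  have key : ∀ θ : ℝ, (Real.sqrt (R ^ 2 - ε ^ 2 * Real.sin θ ^ 2) - ε * Real.cos θ) *
          (Real.sqrt (R ^ 2 - ε ^ 2 * Real.sin (θ + π) ^ 2) - ε * Real.cos (θ + π)) *
          ((Real.sqrt (R ^ 2 - ε ^ 2 * Real.sin θ ^ 2) - ε * Real.cos θ) +
            (Real.sqrt (R ^ 2 - ε ^ 2 * Real.sin (θ + π) ^ 2) - ε * Real.cos (θ + π))) =
      (2 * R * (R ^ 2 - ε ^ 2)) * Real.sqrt (1 - (ε / R) ^ 2 * Real.sin θ ^ 2) := by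
    intro θ
    have hs : Real.sqrt (R ^ 2 - ε ^ 2 * Real.sin θ ^ 2) =
        R * Real.sqrt (1 - (ε / R) ^ 2 * Real.sin θ ^ 2) := by
      have : R ^ 2 - ε ^ 2 * Real.sin θ ^ 2 =
          R ^ 2 * (1 - (ε / R) ^ 2 * Real.sin θ ^ 2) := by
        field_simp
      rw [this, Real.sqrt_mul (sq_nonneg R), Real.sqrt_sq hR.le]
    have hnn : 0 ≤ R ^ 2 - ε ^ 2 * Real.sin θ ^ 2 := by
      have h1 := Real.sin_sq_le_one θ
      have h2 : ε ^ 2 ≤ R ^ 2 := by gcongr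
      nlinarith [mul_le_mul_of_nonneg_left h1 (sq_nonneg ε)]
    have hsq := Real.sq_sqrt hnn
    rw [Real.sin_add_pi, Real.cos_add_pi, neg_sq]
    have hc := Real.sin_sq_add_cos_sq θ
    rw [show 2 * R * (R ^ 2 - ε ^ 2) * Real.sqrt (1 - (ε / R) ^ 2 * Real.sin θ ^ 2) =
      2 * (R ^ 2 - ε ^ 2) * (R * Real.sqrt (1 - (ε / R) ^ 2 * Real.sin θ ^ 2)) by ring, ← hs]
    set S := Real.sqrt (R ^ 2 - ε ^ 2 * Real.sin θ ^ 2)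
    linear_combination (2 * S) * hsq - 2 * S * ε ^ 2 * hc
  have main : (∫ θ in (0 : ℝ)..(2 * π),
        (Real.sqrt (R ^ 2 - ε ^ 2 * Real.sin θ ^ 2) - ε * Real.cos θ) *
          (Real.sqrt (R ^ 2 - ε ^ 2 * Real.sin (θ + π) ^ 2) - ε * Real.cos (θ + π)) *
          ((Real.sqrt (R ^ 2 - ε ^ 2 * Real.sin θ ^ 2) - ε * Real.cos θ) +
            (Real.sqrt (R ^ 2 - ε ^ 2 * Real.sin (θ + π) ^ 2) - ε * Real.cos (θ + π)))) =
      8 * R * (R ^ 2 - ε ^ 2) * ellipticE (ε / R) := by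
    simp only [key]
    rw [intervalIntegral.integral_const_mul,
      aux_four (fun θ => Real.sqrt (1 - (ε / R) ^ 2 * Real.sin θ ^ 2)) (by fun_prop)
        (fun x => by simp only [Real.sin_pi_sub])
        (fun x => by simp only [Real.sin_add_pi, neg_sq]), ellipticE]
    ring
  refine ⟨main, ?_⟩
  rw [main]
  have := Real.pi_pos
  field_simp
  ring
end

section
/- Let G be a simple graph on a finite vertex set whose maximum degree is at most Δ ≥ 1, let v be a vertex of G, and let n ≥ 1. Then the number of vertex subsets S with |S| = n, v ∈ S, and such that the subgraph of G induced on S is connected, is at most (e·Δ)^n, where e is Euler's number. -/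
open Classical in
lemma aux_closed {V : Type*} (G : SimpleGraph V) (S A : Finset V) (v : V) (hvS : v ∈ S)
    (hvA : v ∈ A) (hc : (G.induce (↑S : Set V)).Connected)
    (h : ∀ x ∈ A, ∀ y ∈ S, G.Adj x y → y ∈ A) : S ⊆ A := by
  intro y hy
  have key : ∀ (a b : (↑S : Set V)), (G.induce (↑S : Set V)).Walk a b → a.1 ∈ A → b.1 ∈ A := by
    intro a b w
    induction w with
    | nil => exact id
    | @cons a c b hadj _ ih =>
      intro ha
      exact ih (h _ ha _ c.2 hadj)
  obtain ⟨w⟩ := hc.preconnected ⟨v, hvS⟩ ⟨y, hy⟩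
  exact key _ _ w hvA

lemma aux_exp (D : ℕ) (hD : 1 ≤ D) :
    1 ≤ Real.exp 1 * (1 - 1 / (D : ℝ)) ^ (D - 1) := by
  obtain ⟨k, rfl⟩ : ∃ k, D = k + 1 := ⟨D - 1, by omega⟩
  rcases Nat.eq_zero_or_pos k with rfl | hk
  · simp
  have hk' : (0 : ℝ) < k := by exact_mod_cast hk
  have h1 : (1 + 1 / (k : ℝ)) ^ k ≤ Real.exp 1 := by
    have := Real.add_one_le_exp (1 / (k : ℝ))
    calc (1 + 1 / (k : ℝ)) ^ k ≤ (Real.exp (1 / (k : ℝ))) ^ k := by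
          gcongr
          linarith
      _ = Real.exp 1 := by
          rw [← Real.exp_nat_mul]
          congr 1
          field_simp
  have h2 : (1 + 1 / (k : ℝ)) * (1 - 1 / ((k + 1 : ℕ) : ℝ)) = 1 := by
    push_cast
    field_simp
    ring
  have h3 : (0 : ℝ) ≤ 1 - 1 / ((k + 1 : ℕ) : ℝ) := by
    push_cast
    rw [sub_nonneg, div_le_one (by positivity)]
    linarith
  calc (1 : ℝ) = (1 + 1 / (k : ℝ)) ^ k * (1 - 1 / ((k + 1 : ℕ) : ℝ)) ^ k := by
        rw [← mul_pow, h2, one_pow]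
    _ ≤ _ := by
        rw [Nat.add_sub_cancel]
        gcongr

open Classical in
/-- Outer vertex boundary. -/
noncomputable def auxBd {V : Type*} [Fintype V] (G : SimpleGraph V) (S : Finset V) : Finset V :=
  Finset.univ.filter (fun x => x ∉ S ∧ ∃ y ∈ S, G.Adj y x)

open Classical in
lemma aux_bd_card {V : Type*} [Fintype V] (G : SimpleGraph V)
    [DecidableRel G.Adj] (D : ℕ) (hdeg : ∀ w : V, G.degree w ≤ D)
    (S : Finset V) (hS : 2 ≤ S.card) (hc : (G.induce (↑S : Set V)).Connected) :
    (auxBd G S).card ≤ (D - 1) * S.card := by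
  have h1 : auxBd G S ⊆ S.biUnion (fun y => G.neighborFinset y \ S) := by
    intro x hx
    simp only [auxBd, Finset.mem_filter, Finset.mem_univ, true_and] at hx
    obtain ⟨hx, y, hy, hyx⟩ := hx
    simp only [Finset.mem_biUnion, Finset.mem_sdiff, SimpleGraph.mem_neighborFinset]
    exact ⟨y, hy, hyx, hx⟩
  refine (Finset.card_le_card h1).trans ?_
  rw [mul_comm]
  refine Finset.card_biUnion_le_card_mul _ _ _ ?_
  intro y hy
  have h2 : ∃ z ∈ S, G.Adj y z := by
    by_contra hcon
    push Not at hcon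
    have := aux_closed G S {y} y hy (by simp) hc (by
      intro x hx z hz hxz
      rw [Finset.mem_singleton] at hx
      subst hx
      exact absurd hxz (hcon z hz))
    have := Finset.card_le_card this
    simp at this
    omega
  obtain ⟨z, hz, hyz⟩ := h2
  have h3 : G.neighborFinset y \ S ⊂ G.neighborFinset y := by
    rw [Finset.ssubset_iff_of_subset Finset.sdiff_subset]
    exact ⟨z, by simpa using hyz, by simp [hz]⟩
  have := Finset.card_lt_card h3
  rw [SimpleGraph.card_neighborFinset_eq_degree] at this
  have := hdeg y
  omega

open Classical in
lemma aux_weight {V : Type*} [Fintype V] (p : ℝ) (S B : Finset V) (hd : Disjoint S B) :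
    ∑ U ∈ (S ∪ B)ᶜ.powerset, p ^ (S ∪ U).card * (1 - p) ^ (Fintype.card V - (S ∪ U).card)
      = p ^ S.card * (1 - p) ^ B.card := by
  have h0 := Finset.sum_pow_mul_eq_add_pow p (1 - p) (S ∪ B)ᶜ
  rw [add_sub_cancel, one_pow] at h0
  refine Eq.trans ?_ (mul_one (p ^ S.card * (1 - p) ^ B.card))
  refine Eq.trans ?_ (congrArg (fun t => p ^ S.card * (1 - p) ^ B.card * t) h0)
  simp only [Finset.mul_sum]
  refine Finset.sum_congr rfl ?_
  intro U hU
  rw [Finset.mem_powerset] at hU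
  have hSU : Disjoint S U := by
    rw [Finset.disjoint_left]
    intro a ha hb
    have := hU hb
    simp [ha] at this
  rw [Finset.card_union_of_disjoint hSU]
  have hc1 := Finset.card_compl (S ∪ B)
  have hc2 := Finset.card_union_of_disjoint hd
  have hc3 := Finset.card_le_card hU
  have hc4 := Finset.card_le_univ (S ∪ B)
  have : Fintype.card V - (S.card + U.card) = B.card + ((S ∪ B)ᶜ.card - U.card) := by omega
  rw [this, pow_add, pow_add]
  ring

open Classical in
lemma aux_sum {V : Type*} [Fintype V] (G : SimpleGraph V) (p : ℝ) (hp0 : 0 ≤ p) (hp1 : p ≤ 1)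
    (v : V) (F : Finset (Finset V))
    (hF : ∀ S ∈ F, v ∈ S ∧ (G.induce (↑S : Set V)).Connected) :
    ∑ S ∈ F, p ^ S.card * (1 - p) ^ (auxBd G S).card ≤ 1 := by
  have hd : ∀ S, Disjoint S (auxBd G S) := by
    intro S
    rw [Finset.disjoint_left]
    intro a ha hb
    simp [auxBd, ha] at hb
  have hsub : ∀ S ∈ F, ∀ S' ∈ F, ∀ U ∈ (S ∪ auxBd G S)ᶜ.powerset,
      ∀ U' ∈ (S' ∪ auxBd G S')ᶜ.powerset, S ∪ U = S' ∪ U' → S ⊆ S' := by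
    intro S hS S' hS' U hU U' hU' h
    refine aux_closed G S S' v (hF S hS).1 (hF S' hS').1 (hF S hS).2 ?_
    intro x hx y hy hxy
    by_contra hyn
    have hyb : y ∈ auxBd G S' := by
      simp only [auxBd, Finset.mem_filter, Finset.mem_univ, true_and]
      exact ⟨hyn, x, hx, hxy⟩
    have : y ∈ S' ∪ U' := h ▸ Finset.mem_union_left _ hy
    rcases Finset.mem_union.1 this with h1 | h1
    · exact hyn h1
    · have := (Finset.mem_powerset.1 hU') h1
      simp [hyb] at this
  have htot := Finset.sum_pow_mul_eq_add_pow p (1 - p) (Finset.univ : Finset V)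
  rw [add_sub_cancel, one_pow] at htot
  have hq : 0 ≤ 1 - p := by linarith
  simp_rw [← fun S => aux_weight p S (auxBd G S) (hd S)]
  refine le_trans ?_ htot.le
  rw [Finset.sum_sigma']
  rw [← Finset.sum_image (g := fun x : (_ : Finset V) × Finset V => x.1 ∪ x.2)
    (f := fun T => p ^ T.card * (1 - p) ^ (Fintype.card V - T.card))]
  · rw [Finset.card_univ]
    refine Finset.sum_le_sum_of_subset_of_nonneg ?_ ?_
    · intro T _
      simp
    · intros
      positivity
  · rintro ⟨S, U⟩ h ⟨S', U'⟩ h' heq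
    simp only [Finset.mem_coe, Finset.mem_sigma] at h h'
    change S ∪ U = S' ∪ U' at heq
    have hSS : S = S' := Finset.Subset.antisymm
      (hsub S h.1 S' h'.1 U h.2 U' h'.2 heq) (hsub S' h'.1 S h.1 U' h'.2 U h.2 heq.symm)
    subst hSS
    have hU : ∀ W ∈ (S ∪ auxBd G S)ᶜ.powerset, ∀ a ∈ W, a ∉ S := by
      intro W hW a ha hb
      have := (Finset.mem_powerset.1 hW) ha
      simp [hb] at this
    have : U = U' := by
      ext a
      have h1 := hU U h.2 a
      have h2 := hU U' h'.2 a
      have h3 : a ∈ S ∪ U ↔ a ∈ S ∪ U' := by rw [heq]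
      simp only [Finset.mem_union] at h3
      tauto
    rw [this]

/-- If `G` is a simple graph on a finite vertex set with maximum degree at
most `Δ ≥ 1`, `v` is a vertex and `n ≥ 1`, then the number of `n`-element vertex subsets
containing `v` on which the induced subgraph is connected is at most `(e·Δ)^n`. -/
theorem connected_subgraph_count_le {V : Type*} [Fintype V] (G : SimpleGraph V)
    [DecidableRel G.Adj] (Δ : ℕ) (hΔ : 1 ≤ Δ) (hdeg : ∀ w : V, G.degree w ≤ Δ)
    (v : V) (n : ℕ) (hn : 1 ≤ n) :
    (Nat.card {S : Finset V // S.card = n ∧ v ∈ S ∧ (G.induce (↑S : Set V)).Connected} : ℝ)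
      ≤ (Real.exp 1 * Δ) ^ n := by
  classical
  have hΔ' : (1 : ℝ) ≤ Δ := by exact_mod_cast hΔ
  rw [Nat.card_eq_fintype_card, Fintype.card_subtype]
  set F := Finset.univ.filter (fun S : Finset V =>
    S.card = n ∧ v ∈ S ∧ (G.induce (↑S : Set V)).Connected) with hFdef
  have hF : ∀ S ∈ F, S.card = n ∧ v ∈ S ∧ (G.induce (↑S : Set V)).Connected := by
    intro S hS
    simpa [hFdef] using hS
  rcases Nat.lt_or_ge n 2 with h2 | h2
  · have hn1 : n = 1 := by omega
    have hcard : F.card ≤ 1 := by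
      rw [Finset.card_le_one]
      have : ∀ S ∈ F, S = {v} := by
        intro S hS
        obtain ⟨h, hv, -⟩ := hF S hS
        rw [hn1, Finset.card_eq_one] at h
        obtain ⟨a, rfl⟩ := h
        rw [Finset.mem_singleton] at hv
        rw [hv]
      intro a ha b hb
      rw [this a ha, this b hb]
    have h1 : (F.card : ℝ) ≤ 1 := by exact_mod_cast hcard
    refine h1.trans (one_le_pow₀ ?_)
    have := Real.add_one_le_exp 1
    nlinarith
  have hp1 : 1 / (Δ : ℝ) ≤ 1 := by
    rw [div_le_one (by linarith)]
    exact hΔ'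
  have hsum := aux_sum G (1 / (Δ : ℝ)) (by positivity) hp1 v F (fun S hS => (hF S hS).2)
  have hlow : (F.card : ℝ) * ((1 / (Δ : ℝ)) ^ n * (1 - 1 / (Δ : ℝ)) ^ ((Δ - 1) * n)) ≤ 1 := by
    refine le_trans ?_ hsum
    rw [← nsmul_eq_mul]
    refine Finset.card_nsmul_le_sum _ _ _ ?_
    intro S hS
    obtain ⟨h, hv, hc⟩ := hF S hS
    have hb := aux_bd_card G Δ hdeg S (by omega) hc
    rw [h] at hb ⊢
    refine mul_le_mul_of_nonneg_left ?_ (by positivity)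
    exact pow_le_pow_of_le_one (by linarith) (by linarith [show 0 ≤ 1 / (Δ : ℝ) by positivity]) hb
  have he := one_le_pow₀ (n := n) (aux_exp Δ hΔ)
  have hq : (0 : ℝ) ≤ 1 - 1 / (Δ : ℝ) := by linarith
  have hid : (Real.exp 1 * (1 - 1 / (Δ : ℝ)) ^ (Δ - 1)) ^ n =
      (Real.exp 1 * Δ) ^ n * ((1 / (Δ : ℝ)) ^ n * (1 - 1 / (Δ : ℝ)) ^ ((Δ - 1) * n)) := by
    rw [pow_mul, ← mul_pow, ← mul_pow]
    congr 1
    field_simp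
  calc (F.card : ℝ) ≤ F.card * (Real.exp 1 * (1 - 1 / (Δ : ℝ)) ^ (Δ - 1)) ^ n :=
        le_mul_of_one_le_right (by positivity) he
    _ = (Real.exp 1 * Δ) ^ n *
        (F.card * ((1 / (Δ : ℝ)) ^ n * (1 - 1 / (Δ : ℝ)) ^ ((Δ - 1) * n))) := by
        rw [hid]
        ring
    _ ≤ (Real.exp 1 * Δ) ^ n * 1 := by gcongr
    _ = _ := mul_one _
end

section
/- Let d ≥ 1 and let x, y be points of d-dimensional Euclidean space with dist(x,y) = r, where 0 ≤ r ≤ 2. Then the Lebesgue volume of the intersection of the two closed unit balls centred at x and y equals (π^{d/2}/Γ(d/2 + 1)) · I_{1 − r²/4}((d+1)/2, 1/2), where I_s(a,b) = (∫₀^s t^{a−1}(1−t)^{b−1} dt)/(∫₀^1 t^{a−1}(1−t)^{b−1} dt) is the regularised incomplete beta function. -/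
open MeasureTheory Real intervalIntegral

/-- The regularised incomplete beta function
`I_s(a,b) = (∫₀^s t^{a−1}(1−t)^{b−1} dt)/(∫₀^1 t^{a−1}(1−t)^{b−1} dt)`. -/
noncomputable def regIncompleteBeta (s a b : ℝ) : ℝ :=
  (∫ t in (0 : ℝ)..s, t ^ (a - 1) * (1 - t) ^ (b - 1)) /
    (∫ t in (0 : ℝ)..1, t ^ (a - 1) * (1 - t) ^ (b - 1))

lemma aux_subst (n : ℕ) (h : ℝ) (h0 : 0 ≤ h) (h1 : h ≤ 1) :
    2 * (∫ u in h..1, (1 - u ^ 2) ^ ((n : ℝ) / 2)) =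
      ∫ t in (0 : ℝ)..(1 - h ^ 2), t ^ ((n : ℝ) / 2) * (1 - t) ^ (-(1 / 2) : ℝ) := by
  have key := integral_comp_mul_deriv_of_deriv_nonpos (a := h) (b := 1)
    (f := fun u : ℝ => 1 - u ^ 2) (f' := fun u => -(2 * u))
    (g := fun t : ℝ => t ^ ((n : ℝ) / 2) * (1 - t) ^ (-(1 / 2) : ℝ))
    (by fun_prop)
    (by
      intro x _
      have := (hasDerivAt_pow 2 x).const_sub 1
      simpa using this)
    (by
      intro x hx
      rw [min_eq_left h1, max_eq_right h1] at hx
      have : 0 < x := lt_of_le_of_lt h0 hx.1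
      linarith)
  have e : (∫ x in h..1, ((fun t : ℝ => t ^ ((n : ℝ) / 2) * (1 - t) ^ (-(1 / 2) : ℝ)) ∘
      (fun u : ℝ => 1 - u ^ 2)) x * -(2 * x)) = ∫ x in h..1, -2 * (1 - x ^ 2) ^ ((n : ℝ) / 2) := by
    apply intervalIntegral.integral_congr_ae
    refine Filter.Eventually.of_forall fun x hx => ?_
    rw [Set.uIoc_of_le h1] at hx
    have hx0 : 0 < x := lt_of_le_of_lt h0 hx.1
    have : (1 - (1 - x ^ 2)) ^ (-(1 / 2) : ℝ) = x⁻¹ := by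
      rw [show 1 - (1 - x ^ 2) = x ^ 2 by ring, Real.rpow_neg (by positivity),
        ← Real.sqrt_eq_rpow, Real.sqrt_sq hx0.le]
    simp only [Function.comp, this]
    field_simp
  rw [e, intervalIntegral.integral_const_mul] at key
  rw [intervalIntegral.integral_symm (1 - h ^ 2) 0]
  rw [one_pow, sub_self] at key
  linarith

lemma aux_abs (g : ℝ → ℝ) (h : ℝ) (h1 : h ≤ 1) :
    ∫ t in Set.Icc (-(1 - h)) (1 - h), g (|t| + h) = 2 * ∫ u in h..1, g u := by
  have := integral_comp_abs (f := (Set.Iic (1 - h)).indicator (fun u => g (u + h)))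
  have e : (fun x : ℝ => (Set.Iic (1 - h)).indicator (fun u => g (u + h)) |x|) =
      (Set.Icc (-(1 - h)) (1 - h)).indicator (fun t => g (|t| + h)) := by
    funext x
    simp only [Set.indicator, Set.mem_Iic, Set.mem_Icc, abs_le]
  rw [e, MeasureTheory.integral_indicator measurableSet_Icc,
    MeasureTheory.setIntegral_indicator measurableSet_Iic, Set.Ioi_inter_Iic,
    ← intervalIntegral.integral_of_le (by linarith)] at this
  rw [this, intervalIntegral.integral_comp_add_right]
  simp

lemma aux_section (n : ℕ) (c : ℝ) (hc : 0 ≤ c) :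
    volume {w : Fin n → ℝ | ∑ i, w i ^ 2 ≤ c} =
      ENNReal.ofReal (c ^ ((n : ℝ) / 2)) *
        volume (Metric.closedBall (0 : EuclideanSpace ℝ (Fin n)) 1) := by
  have h1 := Measure.addHaar_closedBall' (volume : Measure (EuclideanSpace ℝ (Fin n)))
    (0 : EuclideanSpace ℝ (Fin n)) (Real.sqrt_nonneg c)
  rw [finrank_euclideanSpace, Fintype.card_fin] at h1
  have h2 : √c ^ n = c ^ ((n : ℝ) / 2) := by
    rw [Real.sqrt_eq_rpow, ← Real.rpow_natCast, ← Real.rpow_mul hc]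
    congr 1
    ring
  rw [h2] at h1
  rw [← h1, ← (PiLp.volume_preserving_toLp (Fin n)).measure_preimage
      Metric.isClosed_closedBall.measurableSet.nullMeasurableSet]
  congr 1
  ext w
  simp [EuclideanSpace.norm_eq, Real.sqrt_le_sqrt_iff hc]

/-- the model region -/
def lensSet (n : ℕ) (h : ℝ) : Set (ℝ × (Fin n → ℝ)) :=
  {p | (p.1 + h) ^ 2 + ∑ i, p.2 i ^ 2 ≤ 1 ∧ (p.1 - h) ^ 2 + ∑ i, p.2 i ^ 2 ≤ 1}

lemma lensSet_meas (n : ℕ) (h : ℝ) : MeasurableSet (lensSet n h) := by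
  apply IsClosed.measurableSet
  have h1 : IsClosed {p : ℝ × (Fin n → ℝ) | (p.1 + h) ^ 2 + ∑ i, p.2 i ^ 2 ≤ 1} :=
    isClosed_le (by fun_prop) (by fun_prop)
  have h2 : IsClosed {p : ℝ × (Fin n → ℝ) | (p.1 - h) ^ 2 + ∑ i, p.2 i ^ 2 ≤ 1} :=
    isClosed_le (by fun_prop) (by fun_prop)
  exact h1.inter h2

lemma lens_section (n : ℕ) (h : ℝ) (h0 : 0 ≤ h) (t : ℝ) :
    volume (Prod.mk t ⁻¹' lensSet n h) =
      (Set.Icc (-(1 - h)) (1 - h)).indicator (fun t =>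
        ENNReal.ofReal ((1 - (|t| + h) ^ 2) ^ ((n : ℝ) / 2)) *
        volume (Metric.closedBall (0 : EuclideanSpace ℝ (Fin n)) 1)) t := by
  have e : Prod.mk t ⁻¹' lensSet n h = {w : Fin n → ℝ | ∑ i, w i ^ 2 ≤ 1 - (|t| + h) ^ 2} := by
    ext w
    simp only [lensSet, Set.mem_preimage, Set.mem_ofPred_eq]
    rcases abs_cases t with ⟨ht, ht'⟩ | ⟨ht, ht'⟩ <;> rw [ht]
    · constructor
      · rintro ⟨a, b⟩; linarith
      · intro a; constructor <;> nlinarith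
    · constructor
      · rintro ⟨a, b⟩; nlinarith
      · intro a; constructor <;> nlinarith
  rw [e]
  by_cases ht : t ∈ Set.Icc (-(1 - h)) (1 - h)
  · rw [Set.indicator_of_mem ht]
    apply aux_section
    have := abs_le.2 ht
    have := abs_nonneg t
    nlinarith
  · rw [Set.indicator_of_notMem ht]
    have h2 : 1 - h < |t| := by
      by_contra hh
      exact ht (abs_le.1 (not_lt.1 hh))
    have : {w : Fin n → ℝ | ∑ i, w i ^ 2 ≤ 1 - (|t| + h) ^ 2} = ∅ := by
      ext w
      simp only [Set.mem_ofPred_eq, Set.mem_empty_iff_false, iff_false, not_le]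
      have : 0 ≤ ∑ i, w i ^ 2 := Finset.sum_nonneg fun i _ => sq_nonneg _
      have := abs_nonneg t
      nlinarith
    rw [this, measure_empty]

lemma lens_vol (n : ℕ) (h : ℝ) (h0 : 0 ≤ h) (h1 : h ≤ 1) :
    volume (lensSet n h) = ENNReal.ofReal
      (∫ t in (0 : ℝ)..(1 - h ^ 2), t ^ ((n : ℝ) / 2) * (1 - t) ^ (-(1 / 2) : ℝ)) *
        volume (Metric.closedBall (0 : EuclideanSpace ℝ (Fin n)) 1) := by
  rw [Measure.volume_eq_prod, Measure.prod_apply (lensSet_meas n h)]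
  simp_rw [lens_section n h h0]
  have hcont : Continuous fun t : ℝ => (1 - (|t| + h) ^ 2) ^ ((n : ℝ) / 2) := by
    apply Continuous.rpow_const
    · fun_prop
    · intro x; right; positivity
  rw [lintegral_indicator measurableSet_Icc, lintegral_mul_const _ (by fun_prop),
    ← ofReal_integral_eq_lintegral_ofReal hcont.integrableOn_Icc,
    aux_abs (fun u => (1 - u ^ 2) ^ ((n : ℝ) / 2)) h h1, aux_subst n h h0 h1]
  refine (ae_restrict_iff' measurableSet_Icc).2 (Filter.Eventually.of_forall fun t ht => ?_)
  apply Real.rpow_nonneg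
  have := abs_le.2 ht
  have := abs_nonneg t
  nlinarith

lemma lens_reduce (n : ℕ) (x y : EuclideanSpace ℝ (Fin (n + 1))) (h : ℝ) (h0 : 0 ≤ h)
    (hxy : dist x y = 2 * h) :
    volume (Metric.closedBall x 1 ∩ Metric.closedBall y 1) = volume (lensSet n h) := by
  set q : EuclideanSpace ℝ (Fin (n + 1)) := EuclideanSpace.single 0 h with hq
  set p : EuclideanSpace ℝ (Fin (n + 1)) := (1 / 2 : ℝ) • (y - x) with hp
  have hn : ‖q‖ = ‖p‖ := by
    rw [hq, hp, norm_smul, ← dist_eq_norm, dist_comm, hxy]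
    simp [abs_of_nonneg h0]
  set R := (ℝ ∙ (q - p))ᗮ.reflection
  have hR : R q = p := Submodule.reflection_sub hn
  have hm1 : MeasurableSet (Metric.closedBall x 1 ∩ Metric.closedBall y 1) :=
    (Metric.isClosed_closedBall.inter Metric.isClosed_closedBall).measurableSet
  have mp1 := (measurePreserving_add_left (volume : Measure (EuclideanSpace ℝ (Fin (n + 1))))
    (x + p)).comp (R.measurePreserving.comp (PiLp.volume_preserving_toLp (Fin (n + 1))))
  have mp2 := volume_preserving_piFinSuccAbove (fun _ : Fin (n + 1) => ℝ) 0
  rw [← mp1.measure_preimage hm1.nullMeasurableSet,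
    ← mp2.measure_preimage (lensSet_meas n h).nullMeasurableSet]
  congr 1
  ext w
  have e1 : x + p + R (WithLp.toLp 2 w) - x = R (WithLp.toLp 2 w + q) := by
    rw [map_add, hR]; abel
  have e2 : x + p + R (WithLp.toLp 2 w) - y = R (WithLp.toLp 2 w - q) := by
    rw [map_sub, hR]
    have : y = x + (2 : ℝ) • p := by rw [hp, smul_smul]; norm_num
    rw [this, two_smul]; abel
  simp only [Set.mem_preimage, Function.comp, Set.mem_inter_iff, Metric.mem_closedBall,
    dist_eq_norm, e1, e2, LinearIsometryEquiv.norm_map, lensSet, Set.mem_ofPred_eq,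
    EuclideanSpace.norm_eq, Real.sqrt_le_one, Fin.sum_univ_succ]
  simp [hq, MeasurableEquiv.piFinSuccAbove, Fin.insertNthEquiv, Fin.tail]

/-- For `d ≥ 1`, the Lebesgue volume of the intersection of two closed unit
balls in `d`-dimensional Euclidean space whose centres are at distance `r ∈ [0,2]` equals
`(π^{d/2}/Γ(d/2 + 1))·I_{1 − r²/4}((d+1)/2, 1/2)`. -/
theorem volume_unitBall_lens_dim (d : ℕ) (hd : 1 ≤ d) (x y : EuclideanSpace ℝ (Fin d))
    (r : ℝ) (hr0 : 0 ≤ r) (hr2 : r ≤ 2) (hxy : dist x y = r) :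
    volume (Metric.closedBall x 1 ∩ Metric.closedBall y 1) =
      ENNReal.ofReal (π ^ ((d : ℝ) / 2) / Real.Gamma ((d : ℝ) / 2 + 1) *
        regIncompleteBeta (1 - r ^ 2 / 4) (((d : ℝ) + 1) / 2) (1 / 2)) := by
  obtain ⟨n, rfl⟩ : ∃ n, d = n + 1 := ⟨d - 1, by omega⟩
  have hn1 : (((n + 1 : ℕ) : ℝ) + 1) / 2 - 1 = (n : ℝ) / 2 := by push_cast; ring
  have hn2 : (1 / 2 : ℝ) - 1 = -(1 / 2) := by norm_num
  have hr : 1 - r ^ 2 / 4 = 1 - (r / 2) ^ 2 := by ring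
  set κ := volume (Metric.closedBall (0 : EuclideanSpace ℝ (Fin n)) 1) with hκ
  have hball : volume (Metric.closedBall x 1) =
      ENNReal.ofReal (π ^ (((n + 1 : ℕ) : ℝ) / 2) / Real.Gamma (((n + 1 : ℕ) : ℝ) / 2 + 1)) := by
    rw [EuclideanSpace.volume_closedBall]
    simp only [Fintype.card_fin, ENNReal.ofReal_one, one_pow, one_mul]
    congr 2
    rw [Real.sqrt_eq_rpow, ← Real.rpow_natCast, ← Real.rpow_mul pi_pos.le]
    congr 1
    ring
  have h00 := lens_reduce n x x 0 le_rfl (by simp)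
  rw [Set.inter_self, hball, lens_vol n 0 le_rfl zero_le_one, ← hκ] at h00
  rw [lens_reduce n x y (r / 2) (by linarith) (by rw [hxy]; ring),
    lens_vol n (r / 2) (by linarith) (by linarith), ← hκ]
  unfold regIncompleteBeta
  rw [hn1, hn2, hr]
  set V := π ^ (((n + 1 : ℕ) : ℝ) / 2) / Real.Gamma (((n + 1 : ℕ) : ℝ) / 2 + 1) with hV
  set A := ∫ t in (0 : ℝ)..(1 - (r / 2) ^ 2), t ^ ((n : ℝ) / 2) * (1 - t) ^ (-(1 / 2) : ℝ)
  norm_num only [] at h00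
  set B := ∫ t in (0 : ℝ)..1, t ^ ((n : ℝ) / 2) * (1 - t) ^ (-(1 / 2) : ℝ)
  have hVpos : 0 < V := div_pos (Real.rpow_pos_of_pos pi_pos _)
    (Real.Gamma_pos_of_pos (by positivity))
  have hB : 0 < B := by
    by_contra hB
    rw [ENNReal.ofReal_of_nonpos (not_lt.1 hB), zero_mul] at h00
    exact absurd (ENNReal.ofReal_eq_zero.1 h00) (not_le.2 hVpos)
  have hκf : κ ≠ ⊤ := measure_closedBall_lt_top.ne
  lift κ to NNReal using hκf with k
  rw [← ENNReal.ofReal_coe_nnreal, ← ENNReal.ofReal_mul hB.le,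
    ENNReal.ofReal_eq_ofReal_iff hVpos.le (by positivity)] at h00
  rw [← ENNReal.ofReal_coe_nnreal, ← ENNReal.ofReal_mul' (by positivity), h00]
  congr 1
  field_simp
end

section
/- Let d ≥ 1 and for r ∈ [0,2] let V_d(r) denote the Lebesgue volume of the intersection of two closed unit balls in d-dimensional Euclidean space whose centres are at distance r. Then V_d(r)/(2 − r)^{(d+1)/2} tends to π^{(d−1)/2}/Γ((d+3)/2) as r tends to 2 from below; that is, V_d(r) = (π^{(d−1)/2}/Γ((d+3)/2))·(2 − r)^{(d+1)/2} + O((2 − r)^{(d+3)/2}) as r → 2⁻. -/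
open MeasureTheory Real Filter Asymptotics Topology

/-- `lensVolume d hd r` is the Lebesgue volume of the intersection of two closed unit balls in
`d`-dimensional Euclidean space (`d ≥ 1`) whose centres are at distance `r` (for `r ≥ 0`). -/
noncomputable def lensVolume (d : ℕ) (hd : 0 < d) (r : ℝ) : ℝ :=
  (volume (Metric.closedBall (0 : EuclideanSpace ℝ (Fin d)) 1 ∩
    Metric.closedBall (EuclideanSpace.single (⟨0, hd⟩ : Fin d) r) 1)).toReal

/-- slices -/
theorem aux_ball_vol (n : ℕ) (m : ℝ) (hm : 0 ≤ m) :
    (volume {y : Fin n → ℝ | ∑ i, y i ^ 2 ≤ m}).toReal =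
      √m ^ n * (√π ^ n / Real.Gamma ((n : ℝ) / 2 + 1)) := by
  rcases Nat.eq_zero_or_pos n with rfl | hn
  · have : {y : Fin 0 → ℝ | ∑ i, y i ^ 2 ≤ m} = Set.univ := by
      ext y; simp [hm]
    rw [this]
    simp [volume_pi]
  · haveI : Nonempty (Fin n) := ⟨⟨0, hn⟩⟩
    have h := EuclideanSpace.volume_closedBall (Fin n) 0 (√m)
    rw [← (PiLp.volume_preserving_toLp (Fin n)).measure_preimage
      Metric.isClosed_closedBall.measurableSet.nullMeasurableSet,
      EuclideanSpace.closedBall_zero_eq _ (Real.sqrt_nonneg m), Real.sq_sqrt hm] at h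
    have h2 : {y : Fin n → ℝ | ∑ i, y i ^ 2 ≤ m} =
      (@WithLp.toLp 2 (Fin n → ℝ)) ⁻¹' {x : EuclideanSpace ℝ (Fin n) | ∑ i, x i ^ 2 ≤ m} := by
      ext y; simp
    rw [h2, h]
    have : 0 < Real.Gamma ((n : ℝ) / 2 + 1) := Real.Gamma_pos_of_pos (by positivity)
    rw [ENNReal.toReal_mul, ENNReal.toReal_pow, ENNReal.toReal_ofReal (Real.sqrt_nonneg m),
      Fintype.card_fin, ENNReal.toReal_ofReal (by positivity)]

theorem aux_fubini (n : ℕ) (hd : 0 < n + 1) (r : ℝ) :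
    lensVolume (n + 1) hd r =
      ∫ x : ℝ, (volume {y : Fin n → ℝ | ∑ i, y i ^ 2 ≤ min (1 - x ^ 2) (1 - (r - x) ^ 2)}).toReal := by
  unfold lensVolume
  set S : Set (ℝ × (Fin n → ℝ)) :=
    {p | ∑ i, p.2 i ^ 2 ≤ min (1 - p.1 ^ 2) (1 - (r - p.1) ^ 2)} with hS
  have hSm : MeasurableSet S := by
    apply IsClosed.measurableSet
    apply isClosed_le <;> fun_prop
  have hmp := (volume_preserving_piFinSuccAbove (fun _ : Fin (n + 1) => ℝ) 0).comp
    (PiLp.volume_preserving_ofLp (Fin (n + 1)))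
  have hset : (Metric.closedBall (0 : EuclideanSpace ℝ (Fin (n + 1))) 1 ∩
    Metric.closedBall (EuclideanSpace.single (⟨0, hd⟩ : Fin (n + 1)) r) 1) =
    ((MeasurableEquiv.piFinSuccAbove (fun _ : Fin (n + 1) => ℝ) 0) ∘
      (@WithLp.ofLp 2 (Fin (n + 1) → ℝ))) ⁻¹' S := by
    ext x
    have e1 : dist x 0 ≤ 1 ↔ ∑ i : Fin n, x i.succ ^ 2 ≤ 1 - x 0 ^ 2 := by
      rw [← sq_le_one_iff₀ dist_nonneg, EuclideanSpace.dist_sq_eq, Fin.sum_univ_succ]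
      simp [Real.dist_eq, sq_abs]
      constructor <;> intro h <;> linarith
    have e2 : dist x (EuclideanSpace.single (⟨0, hd⟩ : Fin (n + 1)) r) ≤ 1 ↔
        ∑ i : Fin n, x i.succ ^ 2 ≤ 1 - (r - x 0) ^ 2 := by
      rw [← sq_le_one_iff₀ dist_nonneg, EuclideanSpace.dist_sq_eq, Fin.sum_univ_succ]
      have : (⟨0, hd⟩ : Fin (n + 1)) = 0 := rfl
      simp [Real.dist_eq, sq_abs, this]
      constructor <;> intro h <;> nlinarith
    simp only [Set.mem_inter_iff, Metric.mem_closedBall, e1, e2, Set.mem_preimage, hS,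
      Function.comp, Set.mem_ofPred_eq, le_min_iff]
    rfl
  rw [hset, hmp.measure_preimage hSm.nullMeasurableSet, Measure.volume_eq_prod,
    Measure.prod_apply hSm, ← integral_toReal]
  · rfl
  · exact (measurable_measure_prodMk_left hSm).aemeasurable
  · refine Eventually.of_forall fun x => ?_
    have hsub : Prod.mk x ⁻¹' S ⊆ Metric.closedBall (0 : Fin n → ℝ) 1 := by
      intro y hy
      simp only [hS, Set.mem_preimage, Set.mem_ofPred_eq, le_min_iff] at hy
      rw [mem_closedBall_zero_iff, pi_norm_le_iff_of_nonneg zero_le_one]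
      intro i
      have := Finset.single_le_sum (f := fun i => y i ^ 2) (fun i _ => sq_nonneg _)
        (Finset.mem_univ i)
      rw [Real.norm_eq_abs, ← sq_le_one_iff_abs_le_one]
      nlinarith [sq_nonneg x]
    exact (measure_mono hsub).trans_lt measure_closedBall_lt_top

theorem aux_formula (n : ℕ) (hd : 0 < n + 1) (r : ℝ) (hr : r ∈ Set.Ioo (1 : ℝ) 2) :
    lensVolume (n + 1) hd r = 2 * (√π ^ n / Real.Gamma ((n : ℝ) / 2 + 1)) *
      ∫ s in (0 : ℝ)..((2 - r) / 2), √(2 * s) ^ n * √(1 - s / 2) ^ n := by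
  obtain ⟨h1, h2⟩ := hr
  rw [aux_fubini]
  set ω := √π ^ n / Real.Gamma ((n : ℝ) / 2 + 1) with hω
  set F : ℝ → ℝ := fun x =>
    (volume {y : Fin n → ℝ | ∑ i, y i ^ 2 ≤ min (1 - x ^ 2) (1 - (r - x) ^ 2)}).toReal with hF
  have hsymm : ∀ x, F (r - x) = F x := by
    intro x
    simp only [hF, sub_sub_cancel]
    rw [min_comm]
  have hval : ∀ x ∈ Set.Icc (r / 2) 1, F x = √(1 - x ^ 2) ^ n * ω := by
    intro x hx
    have : min (1 - x ^ 2) (1 - (r - x) ^ 2) = 1 - x ^ 2 := by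
      apply min_eq_left
      nlinarith [hx.1, hx.2]
    simp only [hF, this]
    apply aux_ball_vol
    nlinarith [hx.1, hx.2]
  have hzero : ∀ x, x ∉ Set.Ioc (r - 1) 1 → x ≠ r - 1 → F x = 0 := by
    intro x hx hx'
    have hneg : min (1 - x ^ 2) (1 - (r - x) ^ 2) < 0 := by
      rw [min_lt_iff]
      by_cases h : 1 < x
      · left; nlinarith
      · right
        have : x < r - 1 := lt_of_le_of_ne (by
          by_contra hc
          exact hx ⟨not_le.mp hc, not_lt.mp h⟩) hx'
        nlinarith
    have hemp : {y : Fin n → ℝ | ∑ i, y i ^ 2 ≤ min (1 - x ^ 2) (1 - (r - x) ^ 2)} = ∅ := by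
      ext y
      simp only [Set.mem_ofPred_eq, Set.mem_empty_iff_false, iff_false, not_le]
      exact hneg.trans_le (Finset.sum_nonneg fun i _ => sq_nonneg _)
    simp only [hF, hemp, measure_empty, ENNReal.toReal_zero]
  have hI : ∫ x, F x = ∫ x in (r - 1)..1, F x := by
    rw [intervalIntegral.integral_of_le (by linarith), ← integral_Icc_eq_integral_Ioc]
    symm
    apply setIntegral_eq_integral_of_forall_compl_eq_zero
    intro x hx
    apply hzero
    · exact fun h => hx (Set.Ioc_subset_Icc_self h)
    · rintro rfl
      exact hx ⟨le_rfl, by linarith⟩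
  have hR : IntervalIntegrable F volume (r / 2) 1 := by
    have hc : IntervalIntegrable (fun x : ℝ => √(1 - x ^ 2) ^ n * ω) volume (r / 2) 1 :=
      Continuous.intervalIntegrable (by fun_prop) _ _
    refine hc.congr fun x hx => ?_
    rw [Set.uIoc_of_le (by linarith)] at hx
    exact (hval x ⟨hx.1.le, hx.2⟩).symm
  have hL : IntervalIntegrable F volume (r - 1) (r / 2) := by
    have := (hR.comp_sub_left r).symm
    simp only [hsymm] at this
    convert this using 1
    ring
  have hLR : ∫ x in (r - 1)..(r / 2), F x = ∫ x in (r / 2)..1, F x := by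
    have := intervalIntegral.integral_comp_sub_left F r (a := r - 1) (b := r / 2)
    simp only [hsymm] at this
    rw [this]
    congr 1 <;> ring
  rw [hI, ← intervalIntegral.integral_add_adjacent_intervals hL hR, hLR]
  have hR2 : ∫ x in (r / 2)..1, F x = ω * ∫ x in (r / 2)..1, √(1 - x ^ 2) ^ n := by
    rw [← intervalIntegral.integral_const_mul]
    apply intervalIntegral.integral_congr
    intro x hx
    rw [Set.uIcc_of_le (by linarith)] at hx
    simp only [hval x hx, mul_comm]
  have hs : ∫ s in (0 : ℝ)..((2 - r) / 2), √(2 * s) ^ n * √(1 - s / 2) ^ n =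
      ∫ x in (r / 2)..1, √(1 - x ^ 2) ^ n := by
    have := intervalIntegral.integral_comp_sub_left (fun x => √(1 - x ^ 2) ^ n) 1
      (a := 0) (b := (2 - r) / 2)
    have e : (1 : ℝ) - (2 - r) / 2 = r / 2 := by ring
    rw [e, sub_zero] at this
    rw [← this]
    apply intervalIntegral.integral_congr
    intro x hx
    rw [Set.uIcc_of_le (by linarith)] at hx
    simp only
    rw [← mul_pow, ← Real.sqrt_mul (by linarith [hx.1])]
    ring_nf
  rw [hR2, hs]
  ring

theorem aux_sqrt_pow (n : ℕ) (x : ℝ) (hx : 0 ≤ x) : √x ^ n = x ^ ((n : ℝ) / 2) := by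
  rw [Real.sqrt_eq_rpow, ← Real.rpow_natCast, ← Real.rpow_mul hx]
  congr 1; ring

theorem aux_main_int (n : ℕ) (h : ℝ) (hh : 0 < h) :
    ∫ s in (0 : ℝ)..h, √(2 * s) ^ n = (2 * h) ^ ((n : ℝ) / 2 + 1) / (n / 2 + 1) / 2 := by
  have h1 : ∫ s in (0 : ℝ)..h, √(2 * s) ^ n = ∫ s in (0 : ℝ)..h, (2 * s) ^ ((n : ℝ) / 2) := by
    apply intervalIntegral.integral_congr
    intro x hx
    rw [Set.uIcc_of_le hh.le] at hx
    exact aux_sqrt_pow n _ (by linarith [hx.1])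
  rw [h1, intervalIntegral.integral_comp_mul_left (fun x => x ^ ((n : ℝ) / 2)) two_ne_zero,
    integral_rpow (Or.inl (by have : (0 : ℝ) ≤ n / 2 := by positivity
                              linarith))]
  rw [mul_zero, Real.zero_rpow (by positivity), smul_eq_mul]
  ring

theorem aux_bound (n : ℕ) (hd : 0 < n + 1) (r : ℝ) (hr : r ∈ Set.Ioo (1 : ℝ) 2) :
    (1 - n * (2 - r)) * (π ^ ((n : ℝ) / 2) / Real.Gamma ((n : ℝ) / 2 + 2) *
      (2 - r) ^ ((n : ℝ) / 2 + 1)) ≤ lensVolume (n + 1) hd r ∧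
    lensVolume (n + 1) hd r ≤ π ^ ((n : ℝ) / 2) / Real.Gamma ((n : ℝ) / 2 + 2) *
      (2 - r) ^ ((n : ℝ) / 2 + 1) := by
  have hG : 0 < Real.Gamma ((n : ℝ) / 2 + 1) := Real.Gamma_pos_of_pos (by positivity)
  have hω : 0 ≤ √π ^ n / Real.Gamma ((n : ℝ) / 2 + 1) := by positivity
  have hmain := aux_main_int n ((2 - r) / 2) (by linarith [hr.2])
  have hL : π ^ ((n : ℝ) / 2) / Real.Gamma ((n : ℝ) / 2 + 2) * (2 - r) ^ ((n : ℝ) / 2 + 1) =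
      2 * (√π ^ n / Real.Gamma ((n : ℝ) / 2 + 1)) *
        ∫ s in (0 : ℝ)..((2 - r) / 2), √(2 * s) ^ n := by
    have e : (n : ℝ) / 2 + 2 = (n / 2 + 1) + 1 := by ring
    rw [hmain, aux_sqrt_pow n π pi_pos.le, e, Real.Gamma_add_one (by positivity),
      mul_div_cancel₀ _ (two_ne_zero' ℝ)]
    field_simp
  rw [hL, aux_formula n hd r hr]
  have hle : (0 : ℝ) ≤ (2 - r) / 2 := by linarith [hr.2]
  have key : ∀ s ∈ Set.Icc (0 : ℝ) ((2 - r) / 2),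
      1 - n * (2 - r) ≤ √(1 - s / 2) ^ n ∧ √(1 - s / 2) ^ n ≤ 1 := by
    intro s hs
    have hq : √(1 - s / 2) ≤ 1 := by
      rw [Real.sqrt_le_one]; linarith [hs.1]
    have hq2 : 1 - s / 2 ≤ √(1 - s / 2) := by
      apply Real.le_sqrt_of_sq_le
      nlinarith [hs.1, hs.2, hr.1]
    refine ⟨?_, pow_le_one₀ (Real.sqrt_nonneg _) hq⟩
    have hb := one_add_mul_le_pow (a := √(1 - s / 2) - 1) (by linarith [Real.sqrt_nonneg (1 - s/2)]) n
    have hn : (0 : ℝ) ≤ n := Nat.cast_nonneg n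
    have : (n : ℝ) * (1 - √(1 - s / 2)) ≤ n * (2 - r) :=
      mul_le_mul_of_nonneg_left (by linarith [hs.2, hs.1]) hn
    have e : 1 + (√(1 - s / 2) - 1) = √(1 - s / 2) := by ring
    rw [e] at hb
    linarith
  have c1 : IntervalIntegrable (fun s : ℝ => √(2 * s) ^ n) volume 0 ((2 - r) / 2) :=
    Continuous.intervalIntegrable (by fun_prop) _ _
  have c2 : IntervalIntegrable (fun s : ℝ => √(2 * s) ^ n * √(1 - s / 2) ^ n) volume 0
    ((2 - r) / 2) := Continuous.intervalIntegrable (by fun_prop) _ _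
  constructor
  · rw [mul_left_comm]
    refine mul_le_mul_of_nonneg_left ?_ (by positivity)
    rw [← intervalIntegral.integral_const_mul]
    refine intervalIntegral.integral_mono_on hle (c1.const_mul _) c2 fun s hs => ?_
    rw [mul_comm]
    exact mul_le_mul_of_nonneg_left (key s hs).1 (by positivity)
  · refine mul_le_mul_of_nonneg_left ?_ (by positivity)
    refine intervalIntegral.integral_mono_on hle c2 c1 fun s hs => ?_
    exact mul_le_of_le_one_right (by positivity) (key s hs).2

/-- For `d ≥ 1`, `V_d(r)/(2 − r)^{(d+1)/2} → π^{(d−1)/2}/Γ((d+3)/2)` as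
`r → 2⁻`; that is, `V_d(r) = (π^{(d−1)/2}/Γ((d+3)/2))·(2 − r)^{(d+1)/2} + O((2 − r)^{(d+3)/2})`
as `r → 2⁻`. -/
theorem lensVolume_asymptotics (d : ℕ) (hd : 0 < d) :
    Tendsto (fun r : ℝ => lensVolume d hd r / (2 - r) ^ (((d : ℝ) + 1) / 2)) (𝓝[<] 2)
      (𝓝 (π ^ (((d : ℝ) - 1) / 2) / Real.Gamma (((d : ℝ) + 3) / 2))) ∧
    (fun r : ℝ =>
        lensVolume d hd r -
          π ^ (((d : ℝ) - 1) / 2) / Real.Gamma (((d : ℝ) + 3) / 2) *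
            (2 - r) ^ (((d : ℝ) + 1) / 2))
      =O[𝓝[<] 2] (fun r : ℝ => (2 - r) ^ (((d : ℝ) + 3) / 2)) := by
  obtain ⟨n, rfl⟩ : ∃ n, d = n + 1 := ⟨d - 1, by omega⟩
  have e1 : (((n + 1 : ℕ) : ℝ) - 1) / 2 = (n : ℝ) / 2 := by push_cast; ring
  have e2 : (((n + 1 : ℕ) : ℝ) + 1) / 2 = (n : ℝ) / 2 + 1 := by push_cast; ring
  have e3 : (((n + 1 : ℕ) : ℝ) + 3) / 2 = (n : ℝ) / 2 + 2 := by push_cast; ring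
  rw [e1, e2, e3]
  set C := π ^ ((n : ℝ) / 2) / Real.Gamma ((n : ℝ) / 2 + 2) with hC
  have hG : 0 < Real.Gamma ((n : ℝ) / 2 + 2) := Real.Gamma_pos_of_pos (by positivity)
  have hC0 : 0 ≤ C := by positivity
  have hmem : Set.Ioo (1 : ℝ) 2 ∈ 𝓝[<] (2 : ℝ) := Ioo_mem_nhdsLT (by norm_num)
  constructor
  · have hlim : Tendsto (fun r : ℝ => (1 - n * (2 - r)) * C) (𝓝[<] 2) (𝓝 C) := by
      have : Tendsto (fun r : ℝ => (1 - n * (2 - r)) * C) (𝓝 2) (𝓝 ((1 - n * (2 - 2)) * C)) :=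
        Continuous.tendsto (by fun_prop) 2
      simp only [sub_self, mul_zero, sub_zero, one_mul] at this
      exact this.mono_left nhdsWithin_le_nhds
    refine tendsto_of_tendsto_of_tendsto_of_le_of_le' hlim tendsto_const_nhds ?_ ?_
    · filter_upwards [hmem] with r hr
      have hp : 0 < (2 - r) ^ ((n : ℝ) / 2 + 1) := Real.rpow_pos_of_pos (by linarith [hr.2]) _
      rw [le_div_iff₀ hp, mul_assoc]
      exact (aux_bound n hd r hr).1
    · filter_upwards [hmem] with r hr
      have hp : 0 < (2 - r) ^ ((n : ℝ) / 2 + 1) := Real.rpow_pos_of_pos (by linarith [hr.2]) _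
      rw [div_le_iff₀ hp]
      exact (aux_bound n hd r hr).2
  · refine IsBigO.of_bound (n * C) ?_
    filter_upwards [hmem] with r hr
    have h2 : 0 < 2 - r := by linarith [hr.2]
    have e : (2 - r) ^ ((n : ℝ) / 2 + 2) = (2 - r) ^ ((n : ℝ) / 2 + 1) * (2 - r) := by
      rw [← Real.rpow_add_one h2.ne']
      congr 1; ring
    have hp : 0 < (2 - r) ^ ((n : ℝ) / 2 + 1) := Real.rpow_pos_of_pos h2 _
    obtain ⟨ha, hb⟩ := aux_bound n hd r hr
    rw [← hC] at ha hb
    rw [Real.norm_eq_abs, Real.norm_eq_abs, e, abs_of_pos (mul_pos hp h2), abs_le]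
    have hpos : 0 ≤ n * C * ((2 - r) ^ ((n : ℝ) / 2 + 1) * (2 - r)) := by positivity
    constructor
    · nlinarith
    · nlinarith
end

section
/- Let y be a point of the Euclidean plane ℝ² with ‖y‖ = r where r ≥ 1, and let λ satisfy r − 1 < λ < r + 1 and λ > 0. Then the one-dimensional Hausdorff measure of the set of points on the circle of radius λ centred at the origin that lie strictly within distance 1 of y equals 2λ·arccos((λ² + r² − 1)/(2rλ)). -/
open MeasureTheory Real

lemma aux_polar (a b l : ℝ) (hl : 0 < l) (h : a ^ 2 + b ^ 2 = l ^ 2) :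
    ∃ t, -π < t ∧ t ≤ π ∧ a = l * cos t ∧ b = l * sin t := by
  refine ⟨Complex.arg ⟨a, b⟩, Complex.neg_pi_lt_arg _, Complex.arg_le_pi _, ?_, ?_⟩
  all_goals
    have hn : ‖(⟨a, b⟩ : ℂ)‖ = l := by
      rw [Complex.norm_eq_sqrt_sq_add_sq]
      simp only [h]
      exact Real.sqrt_sq hl.le
  · have := Complex.norm_mul_cos_arg ⟨a, b⟩
    rw [hn] at this
    exact this.symm
  · have := Complex.norm_mul_sin_arg ⟨a, b⟩
    rw [hn] at this
    exact this.symm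

lemma aux_sin (A k : ℝ) (hA0 : 0 < A) (hA : A < π) (hk0 : 0 < k) (hk : k < 1) :
    ∃ e > 0, ∀ x, 0 ≤ x → x ≤ A → sin x < e → k * x ≤ sin x := by
  have h1k : 0 < 1 - k := by linarith
  have hpi := Real.pi_gt_three
  have hs1 : 0 < sin (1 - k) := sin_pos_of_pos_of_lt_pi h1k (by linarith)
  have hs2 : 0 < sin A := sin_pos_of_pos_of_lt_pi hA0 hA
  refine ⟨min (sin (1 - k)) (sin A), lt_min hs1 hs2, ?_⟩
  intro x hx0 hxA hx
  obtain ⟨hx1, hx2⟩ := lt_min_iff.1 hx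
  rcases hx0.eq_or_lt with rfl | hx0
  · simp
  by_cases hxk : x ≤ 1 - k
  · have := Real.sin_gt_sub_cube hx0
    have h2 : x ^ 2 ≤ 1 - k := by nlinarith
    have h3 : x * x ^ 2 ≤ x * (1 - k) := mul_le_mul_of_nonneg_left h2 hx0.le
    nlinarith [mul_pos hx0 h1k]
  · exfalso
    push Not at hxk
    by_cases hxh : x ≤ π / 2
    · have := Real.sin_lt_sin_of_lt_of_le_pi_div_two (by linarith) hxh hxk
      linarith
    · push Not at hxh
      have := Real.sin_le_sin_of_le_of_le_pi_div_two (x := π - A) (y := π - x) (by linarith)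
        (by linarith) (by linarith)
      rw [sin_pi_sub, sin_pi_sub] at this
      linarith

noncomputable def auxG (l p t : ℝ) : EuclideanSpace ℝ (Fin 2) :=
  !₂[l * cos (p + t), l * sin (p + t)]

lemma aux_dist_sq (l p r q s t : ℝ) :
    dist (auxG l p s) (auxG r q t) ^ 2 = l ^ 2 + r ^ 2 - 2 * l * r * cos ((p + s) - (q + t)) := by
  rw [EuclideanSpace.dist_eq, Real.sq_sqrt (by positivity)]
  simp only [Fin.sum_univ_two, auxG, Real.dist_eq, sq_abs, cos_sub]
  simp
  nlinarith [sin_sq_add_cos_sq (p + s), sin_sq_add_cos_sq (q + t)]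

lemma aux_dist (l p s t : ℝ) (hl : 0 < l) :
    dist (auxG l p s) (auxG l p t) = 2 * l * |sin ((s - t) / 2)| := by
  rw [← sq_eq_sq₀ dist_nonneg (by positivity), aux_dist_sq, mul_pow, sq_abs, sin_sq_eq_half_sub,
    show 2 * ((s - t) / 2) = p + s - (p + t) by ring]
  ring

lemma aux_cont (l p : ℝ) (hl : 0 < l) : LipschitzWith (Real.toNNReal l) (auxG l p) := by
  apply LipschitzWith.of_dist_le_mul
  intro s t
  rw [aux_dist _ _ _ _ hl, Real.coe_toNNReal _ hl.le, Real.dist_eq]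
  have := Real.abs_sin_le_abs (x := (s - t) / 2)
  rw [abs_div, abs_two] at this
  nlinarith

lemma aux_upper (l p A : ℝ) (hl : 0 < l) (hA : 0 < A) :
    μH[1] (auxG l p '' Set.Ioo (-A) A) ≤ ENNReal.ofReal (2 * l * A) := by
  refine ((aux_cont l p hl).hausdorffMeasure_image_le zero_le_one _).trans ?_
  rw [hausdorffMeasure_real, Real.volume_Ioo, ENNReal.rpow_one]
  change ENNReal.ofReal l * _ ≤ _
  rw [← ENNReal.ofReal_mul hl.le]
  apply ENNReal.ofReal_le_ofReal
  linarith

lemma aux_lower_k (l p A k : ℝ) (hl : 0 < l) (hA0 : 0 < A) (hA : A < π) (hk0 : 0 < k)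
    (hk : k < 1) :
    ENNReal.ofReal (k * (2 * l * A)) ≤ μH[1] (auxG l p '' Set.Ioo (-A) A) := by
  obtain ⟨e, he, hsin⟩ := aux_sin A k hA0 hA hk0 hk
  have hcont : Continuous (auxG l p) := (aux_cont l p hl).continuous
  have hkl : 0 < k * l := mul_pos hk0 hl
  let μ : Measure (EuclideanSpace ℝ (Fin 2)) :=
    ENNReal.ofReal (k * l) • (volume.restrict (Set.Ioo (-A) A)).map (auxG l p)
  have hμ : μ ≤ μH[1] := by
    refine Measure.le_hausdorffMeasure 1 μ (ENNReal.ofReal (l * e)) (by simp; positivity) ?_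
    intro s hs
    rw [ENNReal.rpow_one]
    have hcl : Metric.ediam (closure s) = Metric.ediam s := Metric.ediam_closure s
    refine (measure_mono subset_closure).trans ?_
    rw [← hcl] at hs ⊢
    have hm : MeasurableSet (closure s) := isClosed_closure.measurableSet
    generalize closure s = s at hs hm
    simp only [μ, Measure.smul_apply, smul_eq_mul]
    rw [Measure.map_apply hcont.measurable hm,
      Measure.restrict_apply (hcont.measurable hm)]
    have hfin : Metric.ediam s ≠ ⊤ := ne_top_of_le_ne_top ENNReal.ofReal_ne_top hs
    have hd : Metric.ediam (auxG l p ⁻¹' s ∩ Set.Ioo (-A) A) ≤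
        Metric.ediam s / ENNReal.ofReal (k * l) := by
      apply Metric.ediam_le
      rintro a ⟨ha, ha'⟩ b ⟨hb, hb'⟩
      rw [ENNReal.le_div_iff_mul_le (by simp [hkl]) (by simp)]
      have hle : edist (auxG l p a) (auxG l p b) ≤ Metric.ediam s :=
        Metric.edist_le_ediam_of_mem ha hb
      refine le_trans ?_ hle
      have h2 := hle.trans hs
      rw [edist_dist, ENNReal.ofReal_le_ofReal_iff (by positivity)] at h2
      rw [edist_dist, edist_dist, ← ENNReal.ofReal_mul dist_nonneg]
      apply ENNReal.ofReal_le_ofReal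
      rw [aux_dist _ _ _ _ hl] at h2 ⊢
      rw [Real.dist_eq]
      have hab : |a - b| / 2 < A := by
        have : |a - b| < 2 * A := abs_lt.2 ⟨by linarith [ha'.1, hb'.2], by linarith [ha'.2, hb'.1]⟩
        linarith
      have hx0 : 0 ≤ |a - b| / 2 := by positivity
      have hsa : |sin ((a - b) / 2)| = sin (|a - b| / 2) := by
        rw [Real.abs_sin_eq_sin_abs_of_abs_le_pi, abs_div, abs_two]
        rw [abs_div, abs_two]; linarith
      rw [hsa] at h2 ⊢
      have := hsin _ hx0 hab.le (by
        have : l * (2 * sin (|a - b| / 2)) ≤ l * e := by linarith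
        have := le_of_mul_le_mul_left this hl
        linarith)
      nlinarith
    calc _ ≤ ENNReal.ofReal (k * l) * (Metric.ediam s / ENNReal.ofReal (k * l)) := by
            gcongr
            exact (Real.volume_le_diam _).trans hd
      _ ≤ _ := ENNReal.mul_div_le
  refine le_trans ?_ (hμ _)
  simp only [μ, Measure.smul_apply, smul_eq_mul]
  refine le_trans ?_ (mul_le_mul_right (Measure.le_map_apply hcont.aemeasurable _) _)
  refine le_trans ?_ (mul_le_mul_right (measure_mono (Set.subset_preimage_image _ _)) _)
  rw [Measure.restrict_apply_self, Real.volume_Ioo, ← ENNReal.ofReal_mul hkl.le]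
  apply ENNReal.ofReal_le_ofReal
  linarith

lemma aux_lower (l p A : ℝ) (hl : 0 < l) (hA0 : 0 < A) (hA : A < π) :
    ENNReal.ofReal (2 * l * A) ≤ μH[1] (auxG l p '' Set.Ioo (-A) A) := by
  have ht : Filter.Tendsto (fun k : ℝ => ENNReal.ofReal (k * (2 * l * A)))
      (nhdsWithin 1 (Set.Iio 1)) (nhds (ENNReal.ofReal (1 * (2 * l * A)))) := by
    apply Filter.Tendsto.mono_left _ nhdsWithin_le_nhds
    apply Continuous.tendsto (f := fun k : ℝ => ENNReal.ofReal (k * (2 * l * A)))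
    exact ENNReal.continuous_ofReal.comp (by fun_prop)
  rw [one_mul] at ht
  refine le_of_tendsto ht ?_
  filter_upwards [Ioo_mem_nhdsLT (zero_lt_one (α := ℝ))] with k hk
  exact aux_lower_k l p A k hl hA0 hA hk.1 hk.2

/-- For `y ∈ ℝ²` with `‖y‖ = r ≥ 1` and `λ > 0` with `r − 1 < λ < r + 1`, the
one-dimensional Hausdorff measure of the set of points on the circle of radius `λ` about the
origin lying strictly within distance `1` of `y` equals `2λ·arccos((λ² + r² − 1)/(2rλ))`. -/
theorem arcLength_within_unit_disk (y : EuclideanSpace ℝ (Fin 2)) (r l : ℝ)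
    (hr : 1 ≤ r) (hy : ‖y‖ = r) (hl0 : 0 < l) (hl1 : r - 1 < l) (hl2 : l < r + 1) :
    μH[1] (Metric.sphere (0 : EuclideanSpace ℝ (Fin 2)) l ∩ Metric.ball y 1) =
      ENNReal.ofReal (2 * l * Real.arccos ((l ^ 2 + r ^ 2 - 1) / (2 * r * l))) := by
  have hr0 : 0 < r := by linarith
  have hrl : 0 < 2 * r * l := by positivity
  set c := (l ^ 2 + r ^ 2 - 1) / (2 * r * l) with hc
  have hc1 : c < 1 := by
    rw [hc, div_lt_one hrl]; nlinarith
  have hc2 : -1 < c := by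
    rw [hc, lt_div_iff₀ hrl]; nlinarith
  have hcc : c * (2 * r * l) = l ^ 2 + r ^ 2 - 1 := by
    rw [hc]; field_simp
  have hA0 : 0 < arccos c := arccos_pos.2 hc1
  have hA : arccos c < π := by
    refine lt_of_le_of_ne (arccos_le_pi c) ?_
    intro h
    rw [arccos_eq_pi] at h
    linarith
  have hcos : cos (arccos c) = c := cos_arccos hc2.le hc1.le
  have hy2 : y 0 ^ 2 + y 1 ^ 2 = r ^ 2 := by
    rw [← hy, EuclideanSpace.norm_sq_eq]; simp
  obtain ⟨p, -, -, hy0, hy1⟩ := aux_polar _ _ _ hr0 hy2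
  have hyG : y = auxG r p 0 := by
    ext i; fin_cases i <;> simp [auxG, hy0, hy1]
  have key : ∀ t, auxG l p t ∈ Metric.ball y 1 ↔ c < cos t := by
    intro t
    rw [Metric.mem_ball, ← sq_lt_sq₀ dist_nonneg zero_le_one, hyG, aux_dist_sq,
      show p + t - (p + 0) = t by ring]
    constructor
    · intro h
      have : c * (2 * r * l) < cos t * (2 * r * l) := by linarith
      exact lt_of_mul_lt_mul_right this hrl.le
    · intro h
      have : c * (2 * r * l) < cos t * (2 * r * l) := mul_lt_mul_of_pos_right h hrl
      linarith
  have hset : Metric.sphere (0 : EuclideanSpace ℝ (Fin 2)) l ∩ Metric.ball y 1 =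
      auxG l p '' Set.Ioo (-arccos c) (arccos c) := by
    ext x
    constructor
    · rintro ⟨hx, hxb⟩
      have hx2 : x 0 ^ 2 + x 1 ^ 2 = l ^ 2 := by
        rw [mem_sphere_zero_iff_norm] at hx
        rw [← hx, EuclideanSpace.norm_sq_eq]; simp
      have hsc := sin_sq_add_cos_sq p
      obtain ⟨t, ht1, ht2, hxa, hxc⟩ := aux_polar (x 0 * cos p + x 1 * sin p)
        (x 1 * cos p - x 0 * sin p) l hl0 (by linear_combination hx2 + (x 0 ^ 2 + x 1 ^ 2) * hsc)
      have hxG : auxG l p t = x := by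
        ext i; fin_cases i
        · simp [auxG, cos_add]
          linear_combination (-cos p) * hxa + sin p * hxc + x 0 * hsc
        · simp [auxG, sin_add]
          linear_combination (-sin p) * hxa - cos p * hxc + x 1 * hsc
      refine ⟨t, ?_, hxG⟩
      rw [← hxG, key] at hxb
      rw [Set.mem_Ioo, ← abs_lt]
      by_contra hcon
      push Not at hcon
      have := cos_le_cos_of_nonneg_of_le_pi hA0.le (abs_le.2 ⟨ht1.le, ht2⟩) hcon
      rw [cos_abs, hcos] at this
      linarith
    · rintro ⟨t, ht, rfl⟩
      constructor
      · rw [mem_sphere_zero_iff_norm, ← sq_eq_sq₀ (norm_nonneg _) hl0.le,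
          EuclideanSpace.norm_sq_eq]
        simp [auxG]
        linear_combination l ^ 2 * sin_sq_add_cos_sq (p + t)
      · rw [key]
        have := cos_lt_cos_of_nonneg_of_le_pi (abs_nonneg t) hA.le (abs_lt.2 ht)
        rwa [cos_abs, hcos] at this
  rw [hset]
  exact le_antisymm (aux_upper l p _ hl0 hA0) (aux_lower l p _ hl0 hA0 hA)
end

section
/- For r ∈ (3,4), define the double integral J(r) = ∫_{r−1}^{3} 2λ₁·arccos((λ₁² + r² − 1)/(2rλ₁)) · ( ∫_{λ₁−1}^{2} ( 2·arccos(λ₂/2) − λ₂·√(1 − λ₂²/4) ) · 2λ₂·arccos((λ₂² + λ₁² − 1)/(2λ₁λ₂)) dλ₂ ) dλ₁. Then J(r)/(4 − r)^{9/2} tends to 32π√2/945 as r tends to 4 from below; that is, J(r) = (32π√2/945)·(4 − r)^{9/2} + O((4 − r)^{5}) as r → 4⁻. -/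
open Real Filter Asymptotics Topology intervalIntegral

/-- The double integral `J(r)` whose `ρ³` multiple is the expected number of four-hop paths
between two vertices at Euclidean separation `r ∈ [3,4)` in a planar unit disk graph. -/
noncomputable def fourHopIntegral (r : ℝ) : ℝ :=
  ∫ l₁ in (r - 1)..3,
    2 * l₁ * Real.arccos ((l₁ ^ 2 + r ^ 2 - 1) / (2 * r * l₁)) *
      ∫ l₂ in (l₁ - 1)..2,
        (2 * Real.arccos (l₂ / 2) - l₂ * Real.sqrt (1 - l₂ ^ 2 / 4)) *
          (2 * l₂ * Real.arccos ((l₂ ^ 2 + l₁ ^ 2 - 1) / (2 * l₁ * l₂)))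

lemma fh_beta (p q a : ℝ) (hp : 0 < p) (hq : 0 < q) (ha : 0 < a) :
    ∫ x in (0:ℝ)..a, x ^ (p - 1) * (a - x) ^ (q - 1)
      = a ^ (p + q - 1) * ProbabilityTheory.beta p q := by
  have h := Complex.betaIntegral_scaled (p : ℂ) (q : ℂ) ha
  rw [Complex.betaIntegral_eq_Gamma_mul_div _ _ (by simpa) (by simpa)] at h
  apply Complex.ofReal_injective
  rw [← intervalIntegral.integral_ofReal]
  have e : ∫ x in (0:ℝ)..a, ((x ^ (p - 1) * (a - x) ^ (q - 1) : ℝ) : ℂ)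
      = ∫ x in (0:ℝ)..a, (x : ℂ) ^ ((p : ℂ) - 1) * ((a : ℂ) - x) ^ ((q : ℂ) - 1) := by
    apply intervalIntegral.integral_congr
    intro x hx
    rw [Set.uIcc_of_le ha.le] at hx
    simp only
    rw [Complex.ofReal_mul, Complex.ofReal_cpow hx.1, Complex.ofReal_cpow (sub_nonneg.2 hx.2)]
    push_cast
    rfl
  rw [e, h, Complex.ofReal_mul, Complex.ofReal_cpow ha.le, ProbabilityTheory.beta]
  rw [← Complex.ofReal_add p q, Complex.Gamma_ofReal, Complex.Gamma_ofReal, Complex.Gamma_ofReal]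
  push_cast
  rfl

lemma fh_G32 : Real.Gamma (3/2) = √π / 2 := by
  have := Real.Gamma_nat_add_half 1
  norm_num at this ⊢
  exact this
lemma fh_G52 : Real.Gamma (5/2) = 3 * √π / 4 := by
  have := Real.Gamma_nat_add_half 2
  norm_num [Nat.doubleFactorial] at this ⊢
  exact this
lemma fh_G112 : Real.Gamma (11/2) = 945 * √π / 32 := by
  have := Real.Gamma_nat_add_half 5
  norm_num [Nat.doubleFactorial] at this ⊢
  exact this
lemma fh_G4 : Real.Gamma 4 = 6 := by
  have := Real.Gamma_nat_eq_factorial 3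
  norm_num [Nat.factorial] at this ⊢

lemma fh_sqrt_pow (x : ℝ) (hx : 0 ≤ x) (n : ℕ) : √x ^ n = x ^ ((n : ℝ) / 2) := by
  rw [Real.sqrt_eq_rpow, ← Real.rpow_natCast, ← Real.rpow_mul hx]
  congr 1; ring

lemma fh_int1 (s : ℝ) (hs : 0 ≤ s) :
    ∫ t in (0:ℝ)..s, √t ^ 3 * √(s - t) = π / 16 * s ^ 3 := by
  rcases hs.eq_or_lt with rfl | hs
  · simp
  have h := fh_beta (5/2) (3/2) s (by norm_num) (by norm_num) hs
  have e : ∫ t in (0:ℝ)..s, √t ^ 3 * √(s - t)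
      = ∫ x in (0:ℝ)..s, x ^ ((5/2:ℝ) - 1) * (s - x) ^ ((3/2:ℝ) - 1) := by
    apply intervalIntegral.integral_congr
    intro x hx
    rw [Set.uIcc_of_le hs.le] at hx
    simp only
    rw [fh_sqrt_pow x hx.1, Real.sqrt_eq_rpow]
    norm_num
  rw [e, h, ProbabilityTheory.beta]
  norm_num [fh_G32, fh_G52, fh_G4]
  have := Real.mul_self_sqrt Real.pi_pos.le
  linear_combination (s^3 / 16) * this

lemma fh_int2 (s : ℝ) (hs : 0 ≤ s) :
    ∫ t in (0:ℝ)..s, √(s - t) * t ^ 3 = 32 / 315 * √s ^ 9 := by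
  rcases hs.eq_or_lt with rfl | hs
  · simp
  have h := fh_beta 4 (3/2) s (by norm_num) (by norm_num) hs
  have e : ∫ t in (0:ℝ)..s, √(s - t) * t ^ 3
      = ∫ x in (0:ℝ)..s, x ^ ((4:ℝ) - 1) * (s - x) ^ ((3/2:ℝ) - 1) := by
    apply intervalIntegral.integral_congr
    intro x hx
    simp only
    rw [Real.sqrt_eq_rpow, show ((4:ℝ)-1) = ((3:ℕ):ℝ) by norm_num, Real.rpow_natCast]
    norm_num [mul_comm]
  rw [e, h, ProbabilityTheory.beta, fh_sqrt_pow s hs.le]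
  norm_num [fh_G32, fh_G112, fh_G4]
  have := Real.sqrt_pos.2 Real.pi_pos
  field_simp
  norm_num

/-- relative closeness -/
def fhRel (k x y : ℝ) : Prop := |x - y| ≤ k * y

lemma fhRel.mul {k l x y x' y' : ℝ} (h : fhRel k x y) (h' : fhRel l x' y')
    (hy : 0 ≤ y) (hy' : 0 ≤ y') (hl : 0 ≤ l) :
    fhRel (k * (1 + l) + l) (x * x') (y * y') := by
  unfold fhRel at *
  have e : x * x' - y * y' = (x - y) * x' + y * (x' - y') := by ring
  have hx' : |x'| ≤ (1 + l) * y' := by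
    have := abs_add_le (x' - y') y'
    rw [abs_of_nonneg hy'] at this
    simp only [sub_add_cancel] at this
    linarith
  calc |x * x' - y * y'| ≤ |x - y| * |x'| + y * |x' - y'| := by
        rw [e]; refine (abs_add_le _ _).trans ?_
        rw [abs_mul, abs_mul, abs_of_nonneg hy]
    _ ≤ (k * y) * ((1 + l) * y') + y * (l * y') := by
        have := (abs_nonneg _).trans h
        gcongr
    _ = _ := by ring

lemma fhRel.mono {k l x y : ℝ} (h : fhRel k x y) (hy : 0 ≤ y) (hkl : k ≤ l) : fhRel l x y :=
  le_trans h (by gcongr)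

lemma fhRel.of_sq {k x y : ℝ} (hx : 0 ≤ x) (hy : 0 ≤ y) (h : fhRel k (x ^ 2) (y ^ 2)) :
    fhRel k x y := by
  unfold fhRel at *
  have e : x ^ 2 - y ^ 2 = (x - y) * (x + y) := by ring
  rw [e, abs_mul, abs_of_nonneg (by positivity : 0 ≤ x + y)] at h
  rcases hy.eq_or_lt with rfl | hy'
  · have : x = 0 := by
      rw [sub_zero, add_zero, abs_of_nonneg hx] at h
      nlinarith
    simp [this]
  · have h1 := abs_nonneg (x - y)
    by_contra hc
    push Not at hc
    nlinarith

lemma fhRel.integral {k a b : ℝ} {f g : ℝ → ℝ} (hab : a ≤ b)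
    (hf : IntervalIntegrable f MeasureTheory.volume a b)
    (hg : IntervalIntegrable g MeasureTheory.volume a b)
    (h : ∀ x, a ≤ x → x ≤ b → fhRel k (f x) (g x)) :
    fhRel k (∫ x in a..b, f x) (∫ x in a..b, g x) := by
  unfold fhRel at *
  rw [← intervalIntegral.integral_sub hf hg, ← intervalIntegral.integral_const_mul]
  have := intervalIntegral.norm_integral_le_of_norm_le (f := fun x => f x - g x)
    (g := fun x => k * g x) hab
    (Filter.Eventually.of_forall fun x hx => h x hx.1.le hx.2) (hg.const_mul k)
  exact this

lemma fh_arccos {y : ℝ} (h0 : 0 ≤ y) (h1 : y ≤ 1/5) :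
    |arccos (1 - y) ^ 2 - 2 * y| ≤ 3 * y ^ 2 ∧ arccos (1 - y) ≤ 1 := by
  set θ := arccos (1 - y) with hθ
  have hc : cos θ = 1 - y := Real.cos_arccos (by linarith) (by linarith)
  have n0 : 0 ≤ θ := arccos_nonneg _
  have n1 : θ ≤ π := arccos_le_pi _
  have h2 := Real.cos_le_one_sub_mul_cos_sq (x := θ) (by rwa [abs_of_nonneg n0])
  have h3 : 2 * θ ^ 2 ≤ y * π ^ 2 := by
    rw [hc] at h2
    have : 2 / π ^ 2 * θ ^ 2 ≤ y := by linarith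
    have hp := Real.pi_pos
    rw [div_mul_eq_mul_div, div_le_iff₀ (by positivity)] at this
    exact this
  have h4 : π ^ 2 ≤ 10 := by nlinarith [Real.pi_lt_d2, Real.pi_pos]
  have h5 : θ ^ 2 ≤ 5 * y := by nlinarith
  have h6 : θ ≤ 1 := by nlinarith
  refine ⟨?_, h6⟩
  have h7 := Real.cos_bound (x := θ) (by rwa [abs_of_nonneg n0])
  rw [hc, abs_of_nonneg n0] at h7
  have h8 : θ ^ 4 ≤ 25 * y ^ 2 := by nlinarith [sq_nonneg θ]
  rw [abs_le] at *
  constructor <;> nlinarith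

noncomputable def fhArc (a l : ℝ) : ℝ :=
  2 * l * arccos ((l ^ 2 + a ^ 2 - 1) / (2 * max a 1 * max l 1))

lemma fhArc_cont : Continuous (fun p : ℝ × ℝ => fhArc p.1 p.2) := by
  unfold fhArc
  refine Continuous.mul (by fun_prop) (Real.continuous_arccos.comp ?_)
  refine Continuous.div (by fun_prop) (by fun_prop) ?_
  intro p
  have h1 : 0 < max p.1 1 := lt_max_of_lt_right one_pos
  have h2 : 0 < max p.2 1 := lt_max_of_lt_right one_pos
  positivity

lemma fhArc_eq {a l : ℝ} (ha : 1 ≤ a) (hl : 1 ≤ l) :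
    fhArc a l = 2 * l * arccos ((l ^ 2 + a ^ 2 - 1) / (2 * a * l)) := by
  rw [fhArc, max_eq_left ha, max_eq_left hl]

lemma fhArc_rel {a l q d e : ℝ} (ha : 2 ≤ a) (hl : 1 ≤ l) (hla : a - l = 1 - d) (hd : 0 ≤ d)
    (hde : d ≤ e) (he : e ≤ 1/4) (hq : 1/2 ≤ q) (hqe : |l / a - q| ≤ 3 * e) :
    fhRel (8 * e) (fhArc a l) (√(8 * q * d)) := by
  have ha0 : 0 < a := by linarith
  have hl0 : 0 < l := by linarith
  rw [fhArc_eq (by linarith) hl]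
  set y := d * (2 - d) / (2 * a * l) with hy
  have e1 : (l ^ 2 + a ^ 2 - 1) / (2 * a * l) = 1 - y := by
    rw [hy]; field_simp
    have : d = 1 - (a - l) := by linarith
    rw [this]; ring
  have y0 : 0 ≤ y := by
    apply div_nonneg _ (by positivity)
    apply mul_nonneg hd; linarith
  have hal : 2 ≤ a * l := by nlinarith
  have y1 : y ≤ 1/5 := by
    rw [hy, div_le_iff₀ (by positivity)]; nlinarith
  obtain ⟨h1, -⟩ := fh_arccos y0 y1
  rw [e1]
  set θ := arccos (1 - y) with hθ
  have n0 : 0 ≤ θ := arccos_nonneg _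
  apply fhRel.of_sq (by positivity) (by positivity)
  rw [Real.sq_sqrt (by positivity)]
  unfold fhRel
  set w := l / a with hw
  have hly : 2 * l * y = d * (2 - d) / a := by rw [hy]; field_simp
  have w1 : w ≤ 1 := by rw [hw, div_le_one ha0]; linarith
  have w0 : 0 ≤ w := by positivity
  have e2 : 8 * l ^ 2 * y = 4 * d * (2 - d) * w := by rw [hw, hy]; field_simp; ring
  have hly1 : 2 * l * y ≤ d := by
    rw [hly, div_le_iff₀ ha0]; nlinarith
  have e3 : 12 * l ^ 2 * y ^ 2 ≤ 3 * d ^ 2 := by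
    have : (2 * l * y) ^ 2 ≤ d ^ 2 := by gcongr
    nlinarith
  have h2 : |4 * l ^ 2 * (θ ^ 2 - 2 * y)| ≤ 3 * d ^ 2 := by
    rw [abs_mul, abs_of_nonneg (by positivity : 0 ≤ 4 * l ^ 2)]
    calc 4 * l ^ 2 * |θ ^ 2 - 2 * y| ≤ 4 * l ^ 2 * (3 * y ^ 2) := by gcongr
      _ ≤ _ := by linarith
  have e4 : (2 * l * θ) ^ 2 - 8 * q * d
      = 4 * l ^ 2 * (θ ^ 2 - 2 * y) + (-(4 * d ^ 2 * w) + 8 * d * (w - q)) := by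
    linear_combination e2
  have h3 : |8 * d * (w - q)| ≤ 24 * d * e := by
    rw [abs_mul, abs_of_nonneg (by positivity : 0 ≤ 8 * d)]
    nlinarith
  have h4 : |-(4 * d ^ 2 * w)| ≤ 4 * d ^ 2 := by
    rw [abs_neg, abs_of_nonneg (by positivity)]
    nlinarith [sq_nonneg d]
  rw [e4]
  refine (abs_add_le _ _).trans ?_
  have h5 := abs_add_le (-(4 * d ^ 2 * w)) (8 * d * (w - q))
  have h6 : d ^ 2 ≤ d * e := by nlinarith
  have h7 : 32 * (d * e) ≤ 8 * e * (8 * q * d) := by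
    have : 0 ≤ d * e := mul_nonneg hd (by linarith)
    nlinarith
  nlinarith [mul_nonneg hd (hd.trans hde)]

noncomputable def fhLens (t : ℝ) : ℝ := 2 * arccos (t / 2) - t * √(1 - t ^ 2 / 4)

lemma fhLens_rel {t n : ℝ} (ht : 0 ≤ t) (htn : t ≤ n ^ 2) (hn : 0 ≤ n) (hn1 : n ≤ 1/4) :
    fhRel (100 * n) (fhLens (2 - t)) (4 / 3 * √t ^ 3) := by
  unfold fhLens
  set u := √t with hu
  have hut : u ^ 2 = t := Real.sq_sqrt ht
  have u0 : 0 ≤ u := Real.sqrt_nonneg _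
  have un : u ≤ n := by
    rw [hu]; exact Real.sqrt_le_iff.2 ⟨hn, htn⟩
  have ht1 : t ≤ 1/16 := by nlinarith
  have e1 : (2 - t) / 2 = 1 - t / 2 := by ring
  obtain ⟨h1, h1'⟩ := fh_arccos (y := t / 2) (by linarith) (by linarith)
  rw [e1]
  set θ := arccos (1 - t / 2) with hθ
  have n0 : 0 ≤ θ := arccos_nonneg _
  have hs : √(1 - (2 - t) ^ 2 / 4) = sin θ := by
    rw [hθ, Real.sin_arccos]; congr 1; ring
  have hc : cos θ = 1 - t / 2 := Real.cos_arccos (by linarith) (by linarith)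
  have e2 : 2 * θ - (2 - t) * √(1 - (2 - t) ^ 2 / 4) = 2 * θ - sin (2 * θ) := by
    rw [hs, Real.sin_two_mul, hc]; ring
  rw [e2]
  have r1 : fhRel n θ u := by
    apply fhRel.of_sq n0 u0
    unfold fhRel
    rw [hut]
    have : 2 * (t / 2) = t := by ring
    rw [this] at h1
    refine h1.trans ?_
    nlinarith
  have hth : θ ≤ 5/4 * u := by
    have := (abs_le.1 r1).2
    nlinarith
  have hth2 : |2 * θ| ≤ 1 := by
    rw [abs_of_nonneg (by positivity)]; linarith
  have hb := Real.sin_bound hth2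
  rw [abs_of_nonneg (by positivity : 0 ≤ 2 * θ)] at hb
  have r3 : fhRel (6 * n) (θ ^ 3) (u ^ 3) := by
    have h := (r1.mul r1 u0 u0 hn).mul r1 (by positivity) u0 hn
    have e : ∀ x : ℝ, x * x * x = x ^ 3 := fun x => by ring
    rw [e, e] at h
    refine h.mono (by positivity) ?_
    nlinarith
  unfold fhRel at r3 ⊢
  have h4 : θ ^ 4 ≤ 3 * (n * u ^ 3) := by
    have h41 : θ ^ 4 ≤ (5/4 * u) ^ 4 := by gcongr
    have h42 : u * u ^ 3 ≤ n * u ^ 3 := by gcongr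
    have h43 : (5/4 * u) ^ 4 = 625/256 * (u * u ^ 3) := by ring
    have h44 : 0 ≤ u * u ^ 3 := by positivity
    linarith
  have hu3 : 0 ≤ n * u ^ 3 := by positivity
  rw [abs_le] at r3 hb ⊢
  obtain ⟨r31, r32⟩ := r3
  obtain ⟨hb1, hb2⟩ := hb
  have e5 : (2 * θ) ^ 5 = 32 * θ ^ 5 := by ring
  have e7 : θ ^ 5 ≤ θ ^ 4 := pow_le_pow_of_le_one n0 h1' (by norm_num)
  have e6 : (2 * θ) ^ 3 = 8 * θ ^ 3 := by ring
  rw [e5, e6] at hb1 hb2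
  constructor <;> linarith

noncomputable def fhI (s : ℝ) : ℝ := ∫ t in (0:ℝ)..s, fhLens (2 - t) * fhArc (3 - s) (2 - t)

lemma fhLens_cont : Continuous fhLens := by
  unfold fhLens
  exact (continuous_const.mul (Real.continuous_arccos.comp (by fun_prop))).sub (by fun_prop)

lemma fhIntegrand_cont :
    Continuous (fun p : ℝ × ℝ => fhLens (2 - p.2) * fhArc (3 - p.1) (2 - p.2)) :=
  (fhLens_cont.comp (by fun_prop : Continuous fun p : ℝ × ℝ => 2 - p.2)).mul
    (fhArc_cont.comp (by fun_prop : Continuous fun p : ℝ × ℝ => (3 - p.1, 2 - p.2)))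

lemma fhI_cont : Continuous fhI := by
  unfold fhI
  exact intervalIntegral.continuous_parametric_intervalIntegral_of_continuous
    (f := fun s t => fhLens (2 - t) * fhArc (3 - s) (2 - t)) fhIntegrand_cont continuous_id

lemma fhI_rel {s n : ℝ} (hs : 0 ≤ s) (hsn : s ≤ n ^ 2) (hn : 0 ≤ n) (hn1 : n ≤ 1/4) :
    fhRel (152 * n) (fhI s) (4 / 3 * √(16/3) * (π / 16 * s ^ 3)) := by
  have hnn : n ^ 2 ≤ 1/16 := by nlinarith
  rw [← fh_int1 s hs, ← intervalIntegral.integral_const_mul]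
  unfold fhI
  apply fhRel.integral hs
  · exact (fhIntegrand_cont.comp
      (by fun_prop : Continuous fun t : ℝ => (s, t))).intervalIntegrable _ _
  · apply Continuous.intervalIntegrable; fun_prop
  intro t ht hts
  have r1 := fhLens_rel ht (hts.trans hsn) hn hn1
  have r2 : fhRel (8 * n ^ 2) (fhArc (3 - s) (2 - t)) (√(8 * (2/3) * (s - t))) := by
    apply fhArc_rel (by linarith) (by linarith) (by ring) (by linarith) (by linarith)
      (by linarith) (by norm_num)
    have h3 : 0 < 3 - s := by linarith
    have e : (2 - t) / (3 - s) - 2 / 3 = (2 * s - 3 * t) / (3 * (3 - s)) := by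
      field_simp; ring
    rw [e, abs_div, abs_of_pos (by positivity : 0 < 3 * (3 - s)), div_le_iff₀ (by positivity),
      abs_le]
    constructor <;> nlinarith
  have r2' := r2.mono (Real.sqrt_nonneg _) (by nlinarith : 8 * n ^ 2 ≤ 2 * n)
  have r := (r1.mul r2' (by positivity) (by positivity) (by positivity)).mono (by positivity)
    (by nlinarith : _ ≤ 152 * n)
  have e : 4 / 3 * √(16/3) * (√t ^ 3 * √(s - t))
      = 4 / 3 * √t ^ 3 * √(8 * (2/3) * (s - t)) := by
    rw [show (8:ℝ) * (2/3) = 16/3 by norm_num, Real.sqrt_mul (by norm_num) (s - t)]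
    ring
  rw [e]
  exact r

lemma fh_rewrite {e : ℝ} (he : 0 ≤ e) (he1 : e ≤ 1/4) :
    fourHopIntegral (4 - e) = ∫ s in (0:ℝ)..e, fhArc (4 - e) (3 - s) * fhI s := by
  have h1 := intervalIntegral.integral_comp_sub_left (a := 0) (b := e) (fun l₁ : ℝ => 
    2 * l₁ * Real.arccos ((l₁ ^ 2 + (4 - e) ^ 2 - 1) / (2 * (4 - e) * l₁)) *
      ∫ l₂ in (l₁ - 1)..2,
        (2 * Real.arccos (l₂ / 2) - l₂ * Real.sqrt (1 - l₂ ^ 2 / 4)) *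
          (2 * l₂ * Real.arccos ((l₂ ^ 2 + l₁ ^ 2 - 1) / (2 * l₁ * l₂)))) 3
  rw [sub_zero, show 3 - e = 4 - e - 1 by ring] at h1
  rw [fourHopIntegral, ← h1]
  apply intervalIntegral.integral_congr
  intro s hs
  rw [Set.uIcc_of_le he] at hs
  obtain ⟨hs0, hse⟩ := hs
  simp only
  rw [fhArc_eq (by linarith) (by linarith)]
  congr 1
  have h2 := intervalIntegral.integral_comp_sub_left (a := 0) (b := s) (fun l₂ : ℝ => 
        (2 * Real.arccos (l₂ / 2) - l₂ * Real.sqrt (1 - l₂ ^ 2 / 4)) *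
          (2 * l₂ * Real.arccos ((l₂ ^ 2 + (3 - s) ^ 2 - 1) / (2 * (3 - s) * l₂)))) 2
  rw [sub_zero, show 2 - s = 3 - s - 1 by ring] at h2
  rw [← h2, fhI]
  apply intervalIntegral.integral_congr
  intro t ht
  rw [Set.uIcc_of_le hs0] at ht
  obtain ⟨ht0, hts⟩ := ht
  simp only
  rw [fhArc_eq (by linarith) (by linarith), fhLens]

lemma fh_const : √6 * (4 / 3 * √(16/3) * (π / 16)) * (32 / 315) = 32 * π * √2 / 945 := by
  have h : √6 * √(16/3) = 4 * √2 := by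
    rw [← Real.sqrt_mul (by norm_num), show (6:ℝ) * (16/3) = 4 ^ 2 * 2 by norm_num,
      Real.sqrt_mul (by norm_num), Real.sqrt_sq (by norm_num)]
  linear_combination (4 / 3 * (π / 16) * (32 / 315)) * h

lemma fh_main {n : ℝ} (hn : 0 ≤ n) (hn1 : n ≤ 1/4) :
    fhRel (230 * n) (fourHopIntegral (4 - n ^ 2)) (32 * π * √2 / 945 * n ^ 9) := by
  have hnn : n ^ 2 ≤ 1/16 := by nlinarith
  rw [fh_rewrite (by positivity) (by linarith), ← fh_const]
  have e0 : √6 * (4 / 3 * √(16/3) * (π / 16)) * (32 / 315) * n ^ 9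
      = ∫ s in (0:ℝ)..n^2, √6 * (4 / 3 * √(16/3) * (π / 16)) * (√(n^2 - s) * s ^ 3) := by
    rw [intervalIntegral.integral_const_mul, fh_int2 _ (by positivity), Real.sqrt_sq hn]
    ring
  rw [e0]
  apply fhRel.integral (by positivity)
  · exact ((fhArc_cont.comp
      (by fun_prop : Continuous fun s : ℝ => (4 - n ^ 2, 3 - s))).mul
        fhI_cont).intervalIntegrable _ _
  · apply Continuous.intervalIntegrable; fun_prop
  intro s hs hsn
  have r1 := fhI_rel hs hsn hn hn1
  have r2 : fhRel (8 * n ^ 2) (fhArc (4 - n ^ 2) (3 - s)) (√(8 * (3/4) * (n ^ 2 - s))) := by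
    apply fhArc_rel (by linarith) (by linarith) (by ring) (by linarith) (by linarith)
      (by linarith) (by norm_num)
    have h3 : 0 < 4 - n ^ 2 := by linarith
    have e : (3 - s) / (4 - n ^ 2) - 3 / 4 = (3 * n ^ 2 - 4 * s) / (4 * (4 - n ^ 2)) := by
      field_simp; ring
    rw [e, abs_div, abs_of_pos (by positivity : 0 < 4 * (4 - n ^ 2)), div_le_iff₀ (by positivity),
      abs_le]
    constructor <;> nlinarith
  have r2' := r2.mono (Real.sqrt_nonneg _) (by nlinarith : 8 * n ^ 2 ≤ 2 * n)
  have r := (r2'.mul r1 (by positivity) (by positivity) (by positivity)).mono (by positivity)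
    (by nlinarith : _ ≤ 230 * n)
  have e : √6 * (4 / 3 * √(16/3) * (π / 16)) * (√(n^2 - s) * s ^ 3)
      = √(8 * (3/4) * (n ^ 2 - s)) * (4 / 3 * √(16/3) * (π / 16 * s ^ 3)) := by
    rw [show (8:ℝ) * (3/4) = 6 by norm_num, Real.sqrt_mul (by norm_num) (n ^ 2 - s)]
    ring
  rw [e]
  exact r

/-- `J(r)/(4 − r)^{9/2} → 32π√2/945` as `r → 4⁻`; that is,
`J(r) = (32π√2/945)·(4 − r)^{9/2} + O((4 − r)⁵)` as `r → 4⁻`. -/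
theorem fourHopIntegral_asymptotics :
    Tendsto (fun r : ℝ => fourHopIntegral r / (4 - r) ^ ((9 : ℝ) / 2)) (𝓝[<] 4)
      (𝓝 (32 * π * Real.sqrt 2 / 945)) ∧
    (fun r : ℝ => fourHopIntegral r - 32 * π * Real.sqrt 2 / 945 * (4 - r) ^ ((9 : ℝ) / 2))
      =O[𝓝[<] 4] (fun r : ℝ => (4 - r) ^ 5) := by
  set M : ℝ := 32 * π * Real.sqrt 2 / 945 with hM
  have key : ∀ᶠ r : ℝ in 𝓝[<] 4, 0 < √(4 - r) ∧ (4 - r) = √(4 - r) ^ 2 ∧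
      (4 - r) ^ ((9 : ℝ) / 2) = √(4 - r) ^ 9 ∧
      |fourHopIntegral r - M * √(4 - r) ^ 9| ≤ 230 * √(4 - r) * (M * √(4 - r) ^ 9) := by
    have h1 : ∀ᶠ r : ℝ in 𝓝[<] 4, r < 4 := eventually_mem_nhdsWithin
    have h2 : ∀ᶠ r : ℝ in 𝓝[<] 4, 4 - 1/16 < r :=
      nhdsWithin_le_nhds (lt_mem_nhds (by norm_num))
    filter_upwards [h1, h2] with r h1 h2
    have hp : 0 < 4 - r := by linarith
    have hsq : √(4 - r) ^ 2 = 4 - r := Real.sq_sqrt hp.le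
    refine ⟨Real.sqrt_pos.2 hp, hsq.symm, ?_, ?_⟩
    · rw [fh_sqrt_pow _ hp.le]; norm_num
    · have := fh_main (n := √(4 - r)) (Real.sqrt_nonneg _)
        (Real.sqrt_le_iff.2 ⟨by norm_num, by linarith⟩)
      rw [hsq, sub_sub_cancel] at this
      exact this
  constructor
  · rw [tendsto_iff_norm_sub_tendsto_zero]
    have hlim : Tendsto (fun r : ℝ => 230 * √(4 - r) * M) (𝓝[<] 4) (𝓝 0) := by
      have : Continuous (fun r : ℝ => 230 * √(4 - r) * M) := by fun_prop
      have h := (this.tendsto 4).mono_left (nhdsWithin_le_nhds (s := Set.Iio 4))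
      simpa using h
    refine squeeze_zero' (Eventually.of_forall fun _ => norm_nonneg _) ?_ hlim
    filter_upwards [key] with r ⟨h0, _, h9, hb⟩
    rw [h9, Real.norm_eq_abs]
    have hp : 0 < √(4 - r) ^ 9 := by positivity
    have e : fourHopIntegral r / √(4 - r) ^ 9 - M
        = (fourHopIntegral r - M * √(4 - r) ^ 9) / √(4 - r) ^ 9 := by
      field_simp
    rw [e, abs_div, abs_of_pos hp, div_le_iff₀ hp]
    linarith
  · apply IsBigO.of_bound (230 * M)
    filter_upwards [key] with r ⟨h0, h2, h9, hb⟩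
    rw [h9, Real.norm_eq_abs, Real.norm_eq_abs]
    have e : (4 - r) ^ 5 = √(4 - r) ^ 10 := by
      conv_lhs => rw [h2]
      ring
    rw [e, abs_of_pos (by positivity : 0 < √(4 - r) ^ 10)]
    refine hb.trans (le_of_eq ?_)
    ring
end
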